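/- arXiv:1312.1939 — 2 statements merged into one kernel-verified Lean document; each statement's English description precedes it below -/
import Mathlib

section
/- Let λ > 0 and q₋ < x₀ < 0 < q₊. Define F_ε = {x₀ + ε·B(1/(2λ)) > 0} and θ_ε = inf{t ≥ 0 : X_ε(t) = q₊} (finite almost surely on F_ε). Then, as ε → 0⁺, the conditional law Law[θ_ε − (2/λ)·ln(1/ε) | F_ε] converges weakly to the law of (1/λ)·ln(2λ·q₊·|x₀|) + (1/λ)·Z, where Z is a standard Gumbel random variable. -/
open MeasureTheory ProbabilityTheory Filter Topology Set

/-- `B` is a standard Brownian motion (for times `t ≥ 0`) on the probability space `(Ω, P)`. -/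
def IsBrownianMotion {Ω : Type*} [MeasurableSpace Ω] (P : Measure Ω) (B : ℝ → Ω → ℝ) : Prop :=
  (∀ t : ℝ, Measurable (B t)) ∧
  (∀ᵐ ω ∂P, B 0 ω = 0 ∧ ContinuousOn (fun t => B t ω) (Set.Ici (0 : ℝ))) ∧
  (∀ s t : ℝ, 0 ≤ s → s ≤ t →
    Measure.map (fun ω => B t ω - B s ω) P = gaussianReal 0 (Real.toNNReal (t - s))) ∧
  (∀ t : ℕ → ℝ, Monotone t → (∀ i, 0 ≤ t i) →
    iIndepFun (fun i ω => B (t (i + 1)) ω - B (t i) ω) P)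

/-- Pointwise convergence of distribution functions implies weak convergence. -/
lemma tendsto_integral_of_tendsto_measureReal_Iic {ι : Type*} {l : Filter ι}
    [l.IsCountablyGenerated] {μ : ι → Measure ℝ} {ν : Measure ℝ}
    [∀ i, IsProbabilityMeasure (μ i)] [IsProbabilityMeasure ν]
    (h : ∀ x, Tendsto (fun i => (μ i).real (Iic x)) l (𝓝 (ν.real (Iic x))))
    (f : BoundedContinuousFunction ℝ ℝ) :
    Tendsto (fun i => ∫ x, f x ∂(μ i)) l (𝓝 (∫ x, f x ∂ν)) := by
  let μ' : ι → ProbabilityMeasure ℝ := fun i => ⟨μ i, inferInstance⟩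
  let ν' : ProbabilityMeasure ℝ := ⟨ν, inferInstance⟩
  suffices H : Tendsto μ' l (𝓝 ν') from
    ProbabilityMeasure.tendsto_iff_forall_integral_tendsto.1 H f
  refine (isPiSystem_Ioc (id : ℝ → ℝ) id).tendsto_probabilityMeasure_of_tendsto_of_mem ?_ ?_ ?_
  · rintro s ⟨a, b, -, rfl⟩
    exact measurableSet_Ioc
  · intro u hu x hx
    obtain ⟨δ, hδ, hball⟩ := Metric.isOpen_iff.1 hu x hx
    refine ⟨Ioc (x - δ / 2) (x + δ / 2), ⟨x - δ / 2, x + δ / 2, by simp only [id]; linarith, rfl⟩,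
      Ioc_mem_nhds (by linarith) (by linarith), fun y hy => hball ?_⟩
    rw [Metric.mem_ball, Real.dist_eq, abs_lt]
    constructor <;> linarith [hy.1, hy.2]
  · rintro s ⟨a, b, hab, rfl⟩
    have key : ∀ m : Measure ℝ, IsProbabilityMeasure m →
        m.real (Ioc a b) = m.real (Iic b) - m.real (Iic a) := fun m _ => by
      rw [← Iic_sdiff_Iic, measureReal_sdiff (Iic_subset_Iic.2 (show a ≤ b from hab.le)) measurableSet_Iic]
    have := (h b).sub (h a)
    rw [← NNReal.tendsto_coe]
    change Tendsto (fun i => (μ i).real (Ioc a b)) l (𝓝 (ν.real (Ioc a b)))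
    simpa only [key _ inferInstance] using this

/-- Mills asymptotics for the Gaussian tail integral. -/
lemma tendsto_mul_exp_mul_integral_Ioi :
    Tendsto (fun x : ℝ => x * Real.exp (x ^ 2 / 2) * ∫ z in Ioi x, Real.exp (-z ^ 2 / 2))
      atTop (𝓝 1) := by
  have subst : ∀ x : ℝ, 0 < x →
      x * Real.exp (x ^ 2 / 2) * ∫ z in Ioi x, Real.exp (-z ^ 2 / 2)
        = ∫ w in Ioi (0 : ℝ), Real.exp (-w - (w / x) ^ 2 / 2) := by
    intro x hx
    have shift : ∫ z in Ioi x, Real.exp (-z ^ 2 / 2)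
        = ∫ z in Ioi (0 : ℝ), Real.exp (-(x + z) ^ 2 / 2) := by
      rw [← integral_indicator measurableSet_Ioi, ← integral_indicator measurableSet_Ioi,
        ← integral_add_left_eq_self _ x]
      refine integral_congr_ae (ae_of_all _ fun z => ?_)
      simp [indicator]
    have scale := integral_comp_mul_left_Ioi (fun z => Real.exp (-(x + z) ^ 2 / 2)) 0 (inv_pos.2 hx)
    rw [mul_zero, inv_inv, smul_eq_mul] at scale
    rw [shift, mul_right_comm, ← scale, ← integral_mul_const]
    refine integral_congr_ae (ae_of_all _ fun w => ?_)
    simp only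
    rw [← Real.exp_add]
    congr 1
    field_simp
    ring
  have lim : Tendsto (fun x : ℝ => ∫ w in Ioi (0 : ℝ), Real.exp (-w - (w / x) ^ 2 / 2))
      atTop (𝓝 (∫ w in Ioi (0 : ℝ), Real.exp (-w))) := by
    refine tendsto_integral_filter_of_dominated_convergence (fun w => Real.exp (-w))
      (Eventually.of_forall fun x => by fun_prop) (Eventually.of_forall fun x => ae_of_all _ fun w => ?_)
      (integrableOn_exp_neg_Ioi 0) (ae_of_all _ fun w => ?_)
    · rw [Real.norm_eq_abs, Real.abs_exp, Real.exp_le_exp]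
      nlinarith [sq_nonneg (w / x)]
    · have h0 : Tendsto (fun x : ℝ => w / x) atTop (𝓝 0) := tendsto_const_nhds.div_atTop tendsto_id
      have h1 : Tendsto (fun x : ℝ => -w - (w / x) ^ 2 / 2) atTop (𝓝 (-w - 0 ^ 2 / 2)) :=
        tendsto_const_nhds.sub ((h0.pow 2).div_const 2)
      rw [zero_pow two_ne_zero, zero_div, sub_zero] at h1
      exact (Real.continuous_exp.tendsto _).comp h1
  rw [integral_exp_neg_Ioi_zero] at lim
  refine lim.congr' ?_
  filter_upwards [eventually_gt_atTop 0] with x hx using (subst x hx).symm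

lemma gaussianReal_real_Ici (x : ℝ) :
    (gaussianReal 0 1).real (Ici x)
      = (√(2 * Real.pi))⁻¹ * ∫ z in Ioi x, Real.exp (-z ^ 2 / 2) := by
  rw [Measure.real, gaussianReal_apply_eq_integral 0 one_ne_zero, ENNReal.toReal_ofReal
    (integral_nonneg fun z => gaussianPDFReal_nonneg 0 1 z), integral_Ici_eq_integral_Ioi,
    ← integral_const_mul]
  simp [gaussianPDFReal]

/-- Exponential decay of ratios of Gaussian tails. -/
lemma tendsto_gaussianReal_real_Ici_div {ι : Type*} {l : Filter ι} {x y : ι → ℝ} {r : ℝ}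
    (hx : Tendsto x l atTop) (hxy : Tendsto (fun i => x i * (y i - x i)) l (𝓝 r)) :
    Tendsto (fun i => (gaussianReal 0 1).real (Ici (y i)) / (gaussianReal 0 1).real (Ici (x i)))
      l (𝓝 (Real.exp (-r))) := by
  have hxi : Tendsto (fun i => (x i)⁻¹) l (𝓝 0) := tendsto_inv_atTop_zero.comp hx
  have hx0 : ∀ᶠ i in l, 0 < x i := hx.eventually_gt_atTop 0
  have hd : Tendsto (fun i => y i - x i) l (𝓝 0) := by
    have := hxi.mul hxy
    rw [zero_mul] at this
    refine this.congr' ?_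
    filter_upwards [hx0] with i hi
    field_simp
  have hy : Tendsto y l atTop := by
    simpa using hx.atTop_add hd
  have hq : Tendsto (fun i => x i / y i) l (𝓝 1) := by
    have h1 : Tendsto (fun i => 1 - (y i - x i) * (y i)⁻¹) l (𝓝 (1 - 0 * 0)) :=
      tendsto_const_nhds.sub (hd.mul (tendsto_inv_atTop_zero.comp hy))
    rw [mul_zero, sub_zero] at h1
    refine h1.congr' ?_
    filter_upwards [hy.eventually_gt_atTop 0] with i hi
    field_simp
    ring
  have he : Tendsto (fun i => Real.exp (-(x i * (y i - x i)) - (y i - x i) ^ 2 / 2)) l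
      (𝓝 (Real.exp (-r - 0 ^ 2 / 2))) :=
    (Real.continuous_exp.tendsto _).comp (hxy.neg.sub ((hd.pow 2).div_const 2))
  have hmain := ((tendsto_mul_exp_mul_integral_Ioi.comp hy).div
    (tendsto_mul_exp_mul_integral_Ioi.comp hx) one_ne_zero).mul (hq.mul he)
  simp only [div_one, one_mul, zero_pow two_ne_zero, zero_div, sub_zero] at hmain
  refine hmain.congr' ?_
  filter_upwards [hx0, hy.eventually_gt_atTop 0] with i hi hi'
  rw [gaussianReal_real_Ici, gaussianReal_real_Ici,
    mul_div_mul_left _ _ (by positivity : (√(2 * Real.pi))⁻¹ ≠ 0)]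
  have e : Real.exp (x i ^ 2 / 2)
      = Real.exp (y i ^ 2 / 2) * Real.exp (-(x i * (y i - x i)) - (y i - x i) ^ 2 / 2) := by
    rw [← Real.exp_add]
    ring_nf
  simp only [Pi.div_apply, Function.comp]
  rw [e]
  field_simp

lemma measurableSet_first_passage {α : Type*} [MeasurableSpace α] {S : ℕ → α → ℝ}
    (hS : ∀ j, Measurable (S j)) (c : ℕ → ℝ) (k : ℕ) :
    MeasurableSet {v | c k ≤ S k v ∧ ∀ j < k, S j v < c j} := by
  simp only [ofPred_and, ofPred_forall]
  exact (measurableSet_le measurable_const (hS k)).inter <| MeasurableSet.iInter fun j =>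
    MeasurableSet.iInter fun _ => measurableSet_lt (hS j) measurable_const

/-- A maximal inequality of Ottaviani type: if from each level `c k` the walk reaches `d` by time
`n` with probability at least `p`, then crossing some level costs at most a factor `p`. -/
lemma mul_measure_exists_le_sum_le {Ω : Type*} [MeasurableSpace Ω] {P : Measure Ω}
    {ξ : ℕ → Ω → ℝ} (hind : iIndepFun ξ P) (hm : ∀ i, Measurable (ξ i)) {n : ℕ} {c : ℕ → ℝ} {d : ℝ}
    {p : ENNReal} (hp : ∀ k ≤ n, p ≤ P {ω | d - c k ≤ ∑ i ∈ Finset.Ico k n, ξ i ω}) :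
    p * P {ω | ∃ k ≤ n, c k ≤ ∑ i ∈ Finset.range k, ξ i ω}
      ≤ P {ω | d ≤ ∑ i ∈ Finset.range n, ξ i ω} := by
  have hS : ∀ k, Measurable fun ω => ∑ i ∈ Finset.range k, ξ i ω := fun k => by fun_prop
  have hR : ∀ k, Measurable fun ω => ∑ i ∈ Finset.Ico k n, ξ i ω := fun k => by fun_prop
  let A : ℕ → Set Ω := fun k => {ω | c k ≤ ∑ i ∈ Finset.range k, ξ i ω ∧
    ∀ j < k, ∑ i ∈ Finset.range j, ξ i ω < c j}
  let R : ℕ → Set Ω := fun k => {ω | d - c k ≤ ∑ i ∈ Finset.Ico k n, ξ i ω}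
  have hAm : ∀ k, MeasurableSet (A k) := measurableSet_first_passage hS c
  have hRm : ∀ k, MeasurableSet (R k) := fun k => measurableSet_le measurable_const (hR k)
  have hdisj : Pairwise (Function.onFun Disjoint A) := by
    intro j k hjk
    refine Set.disjoint_left.2 fun ω hj hk => ?_
    rcases lt_or_gt_of_ne hjk with h | h
    · exact absurd hj.1 (not_le.2 (hk.2 j h))
    · exact absurd hk.1 (not_le.2 (hj.2 k h))
  have hcover : {ω | ∃ k ≤ n, c k ≤ ∑ i ∈ Finset.range k, ξ i ω}
      ⊆ ⋃ k ∈ Finset.range (n + 1), A k := by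
    classical
    rintro ω ⟨k, hk, hck⟩
    have hex : ∃ k, c k ≤ ∑ i ∈ Finset.range k, ξ i ω := ⟨k, hck⟩
    simp only [mem_iUnion]
    refine ⟨Nat.find hex, Finset.mem_range.2 (Nat.lt_succ_of_le ((Nat.find_min' hex hck).trans hk)),
      Nat.find_spec hex, fun j hj => not_le.1 (Nat.find_min hex hj)⟩
  have hindep : ∀ k, P (A k ∩ R k) = P (A k) * P (R k) := by
    intro k
    have hI := hind.indepFun_finset (Finset.range k) (Finset.Ico k n)
      (by
        rw [Finset.disjoint_left]
        intro i hi hi'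
        rw [Finset.mem_range] at hi
        rw [Finset.mem_Ico] at hi'
        omega) hm
    let past : (Finset.range k → ℝ) → ℕ → ℝ := fun v j =>
      ∑ i ∈ Finset.range j, if h : i ∈ Finset.range k then v ⟨i, h⟩ else 0
    have hpast : ∀ ω, ∀ j ≤ k, past (fun i => ξ i ω) j = ∑ i ∈ Finset.range j, ξ i ω := by
      intro ω j hj
      refine Finset.sum_congr rfl fun i hi => ?_
      rw [dif_pos (Finset.mem_range.2 ((Finset.mem_range.1 hi).trans_le hj))]
    have hpastm : ∀ j, Measurable fun v => past v j := fun j => by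
      refine Finset.measurable_sum _ fun i _ => ?_
      split_ifs with h
      · exact measurable_pi_apply _
      · exact measurable_const
    have hU := measurableSet_first_passage hpastm c k
    have hV : MeasurableSet {v : Finset.Ico k n → ℝ | d - c k ≤ ∑ i, v i} :=
      measurableSet_le measurable_const (by fun_prop)
    have hA : A k = (fun ω (i : Finset.range k) => ξ i ω) ⁻¹'
        {v | c k ≤ past v k ∧ ∀ j < k, past v j < c j} := by
      ext ω
      simp only [A, mem_ofPred_eq, mem_preimage, hpast ω k le_rfl]
      refine and_congr_right fun _ => forall₂_congr fun j hj => ?_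
      rw [hpast ω j hj.le]
    have hR : R k = (fun ω (i : Finset.Ico k n) => ξ i ω) ⁻¹' {v | d - c k ≤ ∑ i, v i} := by
      ext ω
      simp only [R, mem_ofPred_eq, mem_preimage]
      rw [Finset.sum_coe_sort (Finset.Ico k n) fun i => ξ i ω]
    rw [hA, hR]
    exact hI.measure_inter_preimage_eq_mul _ _ hU hV
  calc p * P {ω | ∃ k ≤ n, c k ≤ ∑ i ∈ Finset.range k, ξ i ω}
      ≤ p * ∑ k ∈ Finset.range (n + 1), P (A k) := by
        gcongr
        exact (measure_mono hcover).trans (measure_biUnion_finset_le _ _)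
    _ ≤ ∑ k ∈ Finset.range (n + 1), P (A k ∩ R k) := by
        rw [Finset.mul_sum]
        refine Finset.sum_le_sum fun k hk => ?_
        rw [hindep, mul_comm]
        gcongr
        exact hp k (Nat.lt_succ_iff.1 (Finset.mem_range.1 hk))
    _ = P (⋃ k ∈ Finset.range (n + 1), A k ∩ R k) :=
        (measure_biUnion_finset (fun i _ j _ hij => (hdisj hij).mono inter_subset_left
          inter_subset_left) fun k _ => (hAm k).inter (hRm k)).symm
    _ ≤ P {ω | d ≤ ∑ i ∈ Finset.range n, ξ i ω} := by
        refine measure_mono (iUnion₂_subset fun k hk ω hω => ?_)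
        have h1 := hω.1.1
        have h2 : d - c k ≤ _ := hω.2
        rw [mem_ofPred_eq, ← Finset.sum_range_add_sum_Ico _
          (Nat.lt_succ_iff.1 (Finset.mem_range.1 hk))]
        linarith

lemma sInf_hitting_le_iff {X : ℝ → ℝ} {q t : ℝ} (hc : ContinuousOn X (Ici 0)) (h0 : X 0 < q)
    (hlim : Tendsto X atTop atTop) :
    sInf {r | 0 ≤ r ∧ X r = q} ≤ t ↔ ∃ r ∈ Icc 0 t, q ≤ X r := by
  have ivt : ∀ r, 0 ≤ r → q ≤ X r → ∃ r' ∈ Icc 0 r, X r' = q := fun r hr hq =>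
    intermediate_value_Icc hr (hc.mono Icc_subset_Ici_self) ⟨h0.le, hq⟩
  have hbdd : BddBelow {r | 0 ≤ r ∧ X r = q} := ⟨0, fun r hr => hr.1⟩
  constructor
  · intro h
    obtain ⟨r, hr, hq⟩ := ((eventually_ge_atTop 0).and (hlim.eventually_ge_atTop q)).exists
    obtain ⟨r', hr', hX⟩ := ivt r hr hq
    have hclosed : IsClosed {r | 0 ≤ r ∧ X r = q} :=
      hc.preimage_isClosed_of_isClosed isClosed_Ici (isClosed_singleton (x := q))
    have hmem := hclosed.csInf_mem ⟨r', hr'.1, hX⟩ hbdd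
    exact ⟨_, ⟨hmem.1, h⟩, hmem.2.ge⟩
  · rintro ⟨r, hr, hq⟩
    obtain ⟨r', hr', hX⟩ := ivt r hr.1 hq
    exact (csInf_le hbdd ⟨hr'.1, hX⟩).trans (hr'.2.trans hr.2)

lemma eventually_exists_grid_lt {X : ℝ → ℝ} {c t r : ℝ} (hc : ContinuousOn X (Ici 0))
    (hr : r ∈ Icc 0 t) (hlt : c < X r) :
    ∀ᶠ n : ℕ in atTop, ∃ k ≤ n, c < X (k / n * t) := by
  have ht : 0 ≤ t := hr.1.trans hr.2
  have hrt : r / t * t = r := by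
    rcases ht.eq_or_lt with h | h
    · have : r = 0 := le_antisymm (h ▸ hr.2) hr.1
      simp [this]
    · field_simp
  have hpt : Tendsto (fun n : ℕ => (⌊r / t * n⌋₊ : ℝ) / n * t) atTop (𝓝[Ici 0] r) := by
    refine tendsto_nhdsWithin_iff.2 ⟨?_, Eventually.of_forall fun n => by
      rw [mem_Ici]
      positivity⟩
    have := ((tendsto_nat_floor_mul_div_atTop (div_nonneg hr.1 ht)).comp
      (tendsto_natCast_atTop_atTop (R := ℝ))).mul_const t
    rwa [hrt] at this
  filter_upwards [((hc r hr.1).tendsto.comp hpt).eventually_const_lt hlt] with n hn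
  refine ⟨⌊r / t * n⌋₊, Nat.floor_le_of_le ?_, hn⟩
  exact mul_le_of_le_one_left (Nat.cast_nonneg n) (div_le_one_of_le₀ hr.2 ht)

lemma exists_le_iff_forall_exists_grid {X : ℝ → ℝ} {q t : ℝ} (hc : ContinuousOn X (Ici 0))
    (ht : 0 ≤ t) :
    (∃ r ∈ Icc 0 t, q ≤ X r) ↔
      ∀ m : ℕ, ∃ n k : ℕ, k ≤ n ∧ q - 1 / (m + 1 : ℝ) < X (k / n * t) := by
  constructor
  · rintro ⟨r, hr, hq⟩ m
    have : q - 1 / (m + 1 : ℝ) < X r := (sub_lt_self q (by positivity)).trans_le hq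
    exact (eventually_exists_grid_lt hc hr this).exists
  · intro h
    obtain ⟨r, hr, hmax⟩ := isCompact_Icc.exists_isMaxOn (nonempty_Icc.2 ht)
      (hc.mono Icc_subset_Ici_self)
    refine ⟨r, hr, le_of_forall_pos_lt_add fun η hη => ?_⟩
    obtain ⟨m, hm⟩ := exists_nat_one_div_lt hη
    obtain ⟨n, k, hkn, hk⟩ := h m
    have hmem : (k / n * t : ℝ) ∈ Icc 0 t :=
      ⟨by positivity, mul_le_of_le_one_left ht
        (div_le_one_of_le₀ (Nat.cast_le.2 hkn) (Nat.cast_nonneg n))⟩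
    have : X (k / n * t) ≤ X r := hmax hmem
    linarith

lemma mul_measure_eventually_le {Ω : Type*} [MeasurableSpace Ω] {P : Measure Ω} {G : ℕ → Set Ω}
    {p c : ENNReal} (h : ∀ n, p * P (G n) ≤ c) : p * P {ω | ∀ᶠ n in atTop, ω ∈ G n} ≤ c := by
  have hset : {ω | ∀ᶠ n in atTop, ω ∈ G n} = ⋃ N, ⋂ n ≥ N, G n := by
    ext ω
    simp [eventually_atTop]
  have hmono : Monotone fun N => ⋂ n ≥ N, G n := fun M N hMN =>
    biInter_subset_biInter_left fun n hn => le_trans hMN hn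
  rw [hset, hmono.measure_iUnion, ENNReal.mul_iSup]
  refine iSup_le fun N => le_trans ?_ (h N)
  gcongr
  exact biInter_subset_of_mem (le_refl N)

/-- The time change `t ↦ (1 - e^{-2 λ t}) / (2 λ)`. -/
noncomputable def clock (lam t : ℝ) : ℝ := (1 - Real.exp (-(2 * lam * t))) / (2 * lam)

section clock

variable {lam : ℝ}

lemma clock_zero : clock lam 0 = 0 := by simp [clock]

lemma clock_monotone (hlam : 0 < lam) : Monotone (clock lam) := fun s t hst => by
  unfold clock
  gcongr

lemma clock_nonneg (hlam : 0 < lam) {t : ℝ} (ht : 0 ≤ t) : 0 ≤ clock lam t :=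
  clock_zero.symm.le.trans (clock_monotone hlam ht)

lemma clock_le (hlam : 0 < lam) (t : ℝ) : clock lam t ≤ 1 / (2 * lam) := by
  unfold clock
  gcongr
  linarith [Real.exp_pos (-(2 * lam * t))]

lemma continuous_clock : Continuous (clock lam) := by
  unfold clock
  fun_prop

lemma sub_clock (t : ℝ) : 1 / (2 * lam) - clock lam t = Real.exp (-(lam * t)) ^ 2 / (2 * lam) := by
  rw [clock, ← Real.exp_nat_mul]
  ring_nf

lemma tendsto_clock (hlam : 0 < lam) : Tendsto (clock lam) atTop (𝓝 (1 / (2 * lam))) := by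
  have h1 : Tendsto (fun t : ℝ => 2 * lam * t) atTop atTop :=
    tendsto_id.const_mul_atTop (by positivity)
  have h2 := Real.tendsto_exp_atBot.comp (tendsto_neg_atTop_atBot.comp h1)
  have h3 := (h2.const_sub 1).div_const (2 * lam)
  rw [sub_zero] at h3
  exact h3

lemma continuousOn_exp_mul_clock (hlam : 0 < lam) {b : ℝ → ℝ} (hb : ContinuousOn b (Ici 0))
    (x₀ ε : ℝ) :
    ContinuousOn (fun t => Real.exp (lam * t) * (x₀ + ε * b (clock lam t))) (Ici 0) := by
  have : ContinuousOn (fun t => b (clock lam t)) (Ici 0) :=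
    hb.comp continuous_clock.continuousOn fun t ht => clock_nonneg hlam ht
  exact (by fun_prop : Continuous fun t => Real.exp (lam * t)).continuousOn.mul
    (continuousOn_const.add (continuousOn_const.mul this))

lemma tendsto_exp_mul_clock (hlam : 0 < lam) {b : ℝ → ℝ} (hb : ContinuousOn b (Ici 0))
    {x₀ ε : ℝ} (hpos : 0 < x₀ + ε * b (1 / (2 * lam))) :
    Tendsto (fun t => Real.exp (lam * t) * (x₀ + ε * b (clock lam t))) atTop atTop := by
  have hT : (0 : ℝ) ≤ 1 / (2 * lam) := by positivity
  have hclock : Tendsto (clock lam) atTop (𝓝[Ici 0] (1 / (2 * lam))) :=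
    tendsto_nhdsWithin_iff.2 ⟨tendsto_clock hlam,
      (eventually_ge_atTop 0).mono fun t ht => clock_nonneg hlam ht⟩
  exact (Real.tendsto_exp_atTop.comp (tendsto_id.const_mul_atTop hlam)).atTop_mul_pos hpos
    ((((hb _ hT).tendsto.comp hclock).const_mul ε).const_add x₀)

end clock

namespace IsBrownianMotion

variable {Ω : Type*} [MeasurableSpace Ω] {P : Measure Ω} {B : ℝ → Ω → ℝ}

lemma map_eq (hB : IsBrownianMotion P B) {u : ℝ} (hu : 0 ≤ u) :
    P.map (B u) = gaussianReal 0 u.toNNReal := by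
  have h := hB.2.2.1 0 u le_rfl hu
  rw [sub_zero] at h
  rw [← h]
  refine Measure.map_congr ?_
  filter_upwards [hB.2.1] with ω hω
  rw [hω.1, sub_zero]

lemma measureReal_le (hB : IsBrownianMotion P B) {u : ℝ} (hu : 0 < u) (c : ℝ) :
    P.real {ω | c ≤ B u ω} = (gaussianReal 0 1).real (Ici (c / √u)) := by
  have hmap : (gaussianReal 0 1).map (√u * ·) = gaussianReal 0 u.toNNReal := by
    rw [gaussianReal_map_const_mul, mul_zero, mul_one]
    congr 1
    ext
    simp [Real.sq_sqrt hu.le, hu.le]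
  have hpre : {ω | c ≤ B u ω} = B u ⁻¹' Ici c := rfl
  rw [hpre, ← map_measureReal_apply (hB.1 u) measurableSet_Ici, hB.map_eq hu.le, ← hmap,
    map_measureReal_apply (by fun_prop) measurableSet_Ici]
  congr 1
  ext z
  rw [mem_preimage, mem_Ici, mem_Ici, div_le_iff₀' (Real.sqrt_pos.2 hu)]

lemma one_sub_le_measure_neg_lt [IsProbabilityMeasure P] (hB : IsBrownianMotion P B) {s t c : ℝ}
    (hs : 0 ≤ s) (hst : s ≤ t) (hc : 0 < c) :
    1 - ENNReal.ofReal ((t - s) / c ^ 2) ≤ P {ω | -c < B t ω - B s ω} := by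
  have hm : Measurable fun ω => B t ω - B s ω := (hB.1 t).sub (hB.1 s)
  have hlaw := hB.2.2.1 s t hs hst
  have hset : {ω | -c < B t ω - B s ω} = (fun ω => B t ω - B s ω) ⁻¹' Ioi (-c) := rfl
  rw [hset, ← Measure.map_apply hm measurableSet_Ioi, hlaw, ← compl_Iic,
    prob_compl_eq_one_sub measurableSet_Iic]
  refine tsub_le_tsub_left ?_ 1
  have hcheb := meas_ge_le_variance_div_sq (memLp_id_gaussianReal (μ := 0)
    (v := (t - s).toNNReal) 2) hc
  rw [variance_id_gaussianReal, Real.coe_toNNReal _ (sub_nonneg.2 hst)] at hcheb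
  refine (measure_mono fun z hz => ?_).trans hcheb
  have hz' : z ≤ -c := hz
  simp only [id, integral_id_gaussianReal, sub_zero, mem_ofPred_eq]
  rw [abs_of_neg (by linarith)]
  linarith

lemma measureReal_lt [IsProbabilityMeasure P] (hB : IsBrownianMotion P B) {u : ℝ} (hu : 0 < u)
    (c : ℝ) : P.real {ω | c < B u ω} = (gaussianReal 0 1).real (Ici (c / √u)) := by
  rw [← hB.measureReal_le hu]
  have hv : u.toNNReal ≠ 0 := by simpa using hu
  have := nullSingletonClass_gaussianReal (μ := 0) hv
  change P.real (B u ⁻¹' Ioi c) = P.real (B u ⁻¹' Ici c)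
  rw [← map_measureReal_apply (hB.1 u) measurableSet_Ioi,
    ← map_measureReal_apply (hB.1 u) measurableSet_Ici, hB.map_eq hu.le]
  exact measureReal_congr Ioi_ae_eq_Ici

end IsBrownianMotion

/-- The process `e^{λt} (x₀ + ε B((1 - e^{-2λt}) / (2λ)))`. -/
noncomputable def unstableOU {Ω : Type*} (B : ℝ → Ω → ℝ) (lam x₀ ε t : ℝ) (ω : Ω) : ℝ :=
  Real.exp (lam * t) * (x₀ + ε * B (clock lam t) ω)

lemma le_unstableOU_iff {Ω : Type*} {B : ℝ → Ω → ℝ} {lam x₀ ε t : ℝ}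
    (hε : 0 < ε) (m : ℝ) (ω : Ω) :
    m ≤ unstableOU B lam x₀ ε t ω ↔
      (-x₀ + m * Real.exp (-(lam * t))) / ε ≤ B (clock lam t) ω := by
  rw [unstableOU, div_le_iff₀ hε, Real.exp_neg, ← div_eq_mul_inv,
    ← div_le_iff₀' (Real.exp_pos (lam * t))]
  constructor <;> intro h <;> linarith

section unstableOU

variable {Ω : Type*} [MeasurableSpace Ω] {P : Measure Ω} {B : ℝ → Ω → ℝ} {lam x₀ ε q δ t : ℝ}

lemma measurable_unstableOU (hB : IsBrownianMotion P B) :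
    Measurable (unstableOU B lam x₀ ε t) :=
  (((hB.1 _).const_mul ε).const_add x₀).const_mul _

lemma mul_measure_grid_le [IsProbabilityMeasure P] (hB : IsBrownianMotion P B) (hlam : 0 < lam)
    (hε : 0 < ε) (hδ : 0 < δ) (hδ' : 2 * δ ≤ 1) (hq : 0 < q) (ht : 0 ≤ t) {n : ℕ} (hn : 0 < n) :
    (1 - ENNReal.ofReal (ε ^ 2 / (2 * lam * q ^ 2 * δ ^ 2))) *
        P {ω | ∃ k ≤ n, (1 - δ) * q ≤ unstableOU B lam x₀ ε (k / n * t) ω}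
      ≤ P {ω | (1 - 2 * δ) * q ≤ unstableOU B lam x₀ ε t ω} := by
  let r : ℕ → ℝ := fun k => (min k n : ℕ) / n * t
  have hr : Monotone r := fun i j hij => by
    simp only [r]
    gcongr
  have hr0 : ∀ i, 0 ≤ r i := fun i => by positivity
  have hrk : ∀ k ≤ n, r k = k / n * t := fun k hk => by simp only [r, min_eq_left hk]
  have hrn : r n = t := by
    rw [hrk n le_rfl, div_self (by positivity), one_mul]
  let u : ℕ → ℝ := fun k => clock lam (r k)
  have hu : Monotone u := (clock_monotone hlam).comp hr
  have hu0 : ∀ i, 0 ≤ u i := fun i => clock_nonneg hlam (hr0 i)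
  have hu00 : u 0 = 0 := by simp [u, r, clock_zero]
  let c : ℕ → ℝ := fun k => (-x₀ + (1 - δ) * q * Real.exp (-(lam * r k))) / ε
  let d : ℝ := (-x₀ + (1 - 2 * δ) * q * Real.exp (-(lam * t))) / ε
  have hsum : ∀ ω k, ∑ i ∈ Finset.range k, (B (u (i + 1)) ω - B (u i) ω)
      = B (u k) ω - B 0 ω := fun ω k => by
    rw [Finset.sum_range_sub (fun i => B (u i) ω), hu00]
  have hmax := mul_measure_exists_le_sum_le (P := P) (hB.2.2.2 u hu hu0)
    (fun i => (hB.1 _).sub (hB.1 _)) (n := n) (c := c) (d := d)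
    (p := 1 - ENNReal.ofReal (ε ^ 2 / (2 * lam * q ^ 2 * δ ^ 2))) ?_
  · have hL : P {ω | ∃ k ≤ n, (1 - δ) * q ≤ unstableOU B lam x₀ ε (k / n * t) ω}
        = P {ω | ∃ k ≤ n, c k ≤ ∑ i ∈ Finset.range k, (B (u (i + 1)) ω - B (u i) ω)} := by
      refine measure_congr ?_
      filter_upwards [hB.2.1] with ω hω
      refine propext (exists_congr fun k => and_congr_right fun hk => ?_)
      rw [hsum, hω.1, sub_zero, le_unstableOU_iff hε, ← hrk k hk]
    have hR : P {ω | (1 - 2 * δ) * q ≤ unstableOU B lam x₀ ε t ω}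
        = P {ω | d ≤ ∑ i ∈ Finset.range n, (B (u (i + 1)) ω - B (u i) ω)} := by
      refine measure_congr ?_
      filter_upwards [hB.2.1] with ω hω
      refine propext ?_
      change (1 - 2 * δ) * q ≤ unstableOU B lam x₀ ε t ω ↔ d ≤ _
      rw [hsum, hω.1, sub_zero, le_unstableOU_iff hε]
      simp only [u, hrn, d]
    rw [hL, hR]
    exact hmax
  · intro k hk
    have hexp : Real.exp (-(lam * t)) ≤ Real.exp (-(lam * r k)) := by
      have := hr hk
      rw [hrn] at this
      gcongr
    have hcheb := hB.one_sub_le_measure_neg_lt (hu0 k) (hu hk)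
      (c := q * δ * Real.exp (-(lam * r k)) / ε) (by positivity)
    refine le_trans (tsub_le_tsub_left (ENNReal.ofReal_le_ofReal ?_) 1)
      (hcheb.trans (measure_mono fun ω hω => ?_))
    · have h1 : u n - u k ≤ Real.exp (-(lam * r k)) ^ 2 / (2 * lam) := by
        rw [← sub_clock]
        exact sub_le_sub_right (clock_le hlam _) _
      calc (u n - u k) / (q * δ * Real.exp (-(lam * r k)) / ε) ^ 2
          ≤ (Real.exp (-(lam * r k)) ^ 2 / (2 * lam)) /
              (q * δ * Real.exp (-(lam * r k)) / ε) ^ 2 := by gcongr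
        _ = ε ^ 2 / (2 * lam * q ^ 2 * δ ^ 2) := by
            have := Real.exp_ne_zero (-(lam * r k))
            field_simp
    · have h1 : -(q * δ * Real.exp (-(lam * r k)) / ε) < B (u n) ω - B (u k) ω := hω
      rw [mem_ofPred_eq, Finset.sum_Ico_eq_sub _ hk, hsum, hsum]
      have h2 : d - c k ≤ -(q * δ * Real.exp (-(lam * r k)) / ε) := by
        simp only [d, c]
        rw [← sub_div, ← neg_div]
        gcongr
        have := mul_le_mul_of_nonneg_left hexp
          (mul_nonneg (sub_nonneg.2 hδ') hq.le)
        linarith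
      linarith

lemma mul_measure_exists_le_unstableOU_le [IsProbabilityMeasure P] (hB : IsBrownianMotion P B)
    (hlam : 0 < lam) (hε : 0 < ε) (hδ : 0 < δ) (hδ' : 2 * δ ≤ 1) (hq : 0 < q) (ht : 0 ≤ t) :
    (1 - ENNReal.ofReal (ε ^ 2 / (2 * lam * q ^ 2 * δ ^ 2))) *
        P {ω | ∃ r ∈ Icc 0 t, q ≤ unstableOU B lam x₀ ε r ω}
      ≤ P {ω | (1 - 2 * δ) * q ≤ unstableOU B lam x₀ ε t ω} := by
  refine le_trans ?_ (mul_measure_eventually_le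
    (G := fun n => {ω | ∃ k ≤ n + 1, (1 - δ) * q ≤ unstableOU B lam x₀ ε (k / (n + 1 : ℕ) * t) ω})
    fun n => mul_measure_grid_le hB hlam hε hδ hδ' hq ht n.succ_pos)
  refine mul_le_mul_right (measure_mono_ae ?_) _
  filter_upwards [hB.2.1] with ω hω
  rintro ⟨r, hr, hqr⟩
  have hlt : (1 - δ) * q < unstableOU B lam x₀ ε r ω := by
    refine lt_of_lt_of_le ?_ hqr
    nlinarith
  have hev := eventually_exists_grid_lt
    (continuousOn_exp_mul_clock hlam hω.2 x₀ ε) hr hlt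
  filter_upwards [(tendsto_add_atTop_nat 1).eventually hev] with n hn
  obtain ⟨k, hk, h⟩ := hn
  exact ⟨k, hk, h.le⟩

lemma mul_measure_le_unstableOU_le [IsProbabilityMeasure P] (hB : IsBrownianMotion P B)
    (hlam : 0 < lam) (hε : 0 < ε) (hq : 0 < q) (ht : 0 ≤ t) :
    (1 - ENNReal.ofReal (ε ^ 2 / (2 * lam * q ^ 2))) *
        P {ω | q ≤ unstableOU B lam x₀ ε t ω}
      ≤ P ({ω | 0 < x₀ + ε * B (1 / (2 * lam)) ω} ∩ {ω | q ≤ unstableOU B lam x₀ ε t ω}) := by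
  let v : ℕ → ℝ := fun i => if i = 0 then 0 else if i = 1 then clock lam t else 1 / (2 * lam)
  have hT : (0 : ℝ) ≤ 1 / (2 * lam) := by positivity
  have hu0 := clock_nonneg hlam ht
  have huT := clock_le hlam t
  have hv0 : ∀ i, 0 ≤ v i := fun i => by
    simp only [v]
    split_ifs <;> first | exact le_rfl | assumption
  have hv : Monotone v := monotone_nat_of_le_succ fun i => by
    rcases i with _ | _ | i
    · simpa [v] using hu0
    · simpa [v] using huT
    · simp [v]
  have hind := (hB.2.2.2 v hv hv0).indepFun (zero_ne_one (α := ℕ))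
  simp only [v, zero_add, if_true, one_ne_zero, if_false, Nat.reduceAdd, OfNat.ofNat_ne_zero,
    OfNat.ofNat_ne_one] at hind
  have hprod := hind.measure_inter_preimage_eq_mul
    (Ici ((-x₀ + q * Real.exp (-(lam * t))) / ε)) (Ioi (-(q * Real.exp (-(lam * t)) / ε)))
    measurableSet_Ici measurableSet_Ioi
  have hcheb := hB.one_sub_le_measure_neg_lt hu0 huT
    (c := q * Real.exp (-(lam * t)) / ε) (by positivity)
  have hη : (1 / (2 * lam) - clock lam t) / (q * Real.exp (-(lam * t)) / ε) ^ 2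
      = ε ^ 2 / (2 * lam * q ^ 2) := by
    rw [sub_clock]
    have := Real.exp_ne_zero (-(lam * t))
    field_simp
  rw [hη] at hcheb
  have hA : P {ω | q ≤ unstableOU B lam x₀ ε t ω} = P ((fun ω => B (clock lam t) ω - B 0 ω) ⁻¹'
      Ici ((-x₀ + q * Real.exp (-(lam * t))) / ε)) := by
    refine measure_congr ?_
    filter_upwards [hB.2.1] with ω hω
    refine propext ?_
    change q ≤ unstableOU B lam x₀ ε t ω ↔ _ ≤ B (clock lam t) ω - B 0 ω
    rw [le_unstableOU_iff hε, hω.1, sub_zero]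
  rw [hA, mul_comm]
  refine (mul_le_mul_right hcheb _).trans (hprod.symm.le.trans (measure_mono_ae ?_))
  filter_upwards [hB.2.1] with ω hω
  rintro ⟨h1, h2⟩
  have h1' : _ ≤ B (clock lam t) ω - B 0 ω := h1
  have h2' : _ < B (1 / (2 * lam)) ω - B (clock lam t) ω := h2
  rw [hω.1, sub_zero] at h1'
  refine ⟨?_, (le_unstableOU_iff hε _ _).2 h1'⟩
  have h3 : -x₀ / ε < B (1 / (2 * lam)) ω := by
    rw [add_div] at h1'
    linarith
  rw [div_lt_iff₀ hε] at h3
  change 0 < x₀ + ε * B (1 / (2 * lam)) ω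
  linarith

end unstableOU

lemma one_sub_mul_measureReal_le {Ω : Type*} [MeasurableSpace Ω] {P : Measure Ω}
    [IsProbabilityMeasure P] {A C : Set Ω} {η : ℝ} (hη : 0 ≤ η)
    (h : (1 - ENNReal.ofReal η) * P A ≤ P C) : (1 - η) * P.real A ≤ P.real C := by
  have h1 := ENNReal.toReal_mono (measure_ne_top P C) h
  rw [ENNReal.toReal_mul] at h1
  refine le_trans ?_ h1
  have h2 := ENNReal.le_toReal_sub (a := 1) (b := ENNReal.ofReal η) ENNReal.ofReal_ne_top
  rw [ENNReal.toReal_one, ENNReal.toReal_ofReal hη] at h2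
  exact mul_le_mul_of_nonneg_right h2 ENNReal.toReal_nonneg

/-- Asymptotics of the normalised levels in the Gaussian tail ratio. -/
lemma tendsto_mul_level_sub_level {a q κ v : ℝ} (hv : 0 < v) {c : ℝ → ℝ}
    (hc : Tendsto c (𝓝[>] 0) (𝓝 1)) :
    Tendsto (fun ε => (a / ε / √v) *
        ((a + c ε * q * (κ * ε ^ 2)) / ε / √(v - (κ * ε ^ 2) ^ 2 * v) - a / ε / √v))
      (𝓝[>] 0) (𝓝 (a * q * κ / v)) := by
  have hε : Tendsto (fun ε : ℝ => ε) (𝓝[>] 0) (𝓝 0) := tendsto_nhdsWithin_of_tendsto_nhds tendsto_id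
  have hh : Tendsto (fun ε : ℝ => √(1 - (κ * ε ^ 2) ^ 2)) (𝓝[>] 0) (𝓝 1) := by
    have : Continuous fun ε : ℝ => √(1 - (κ * ε ^ 2) ^ 2) := by fun_prop
    simpa using this.continuousWithinAt.tendsto (x := 0) (s := Ioi 0)
  have hlim : Tendsto (fun ε : ℝ => (a ^ 2 * κ ^ 2 * ε ^ 2 /
      (√(1 - (κ * ε ^ 2) ^ 2) * (1 + √(1 - (κ * ε ^ 2) ^ 2)))
        + a * c ε * q * κ / √(1 - (κ * ε ^ 2) ^ 2)) / v) (𝓝[>] 0)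
      (𝓝 ((a ^ 2 * κ ^ 2 * 0 ^ 2 / (1 * (1 + 1)) + a * 1 * q * κ / 1) / v)) :=
    (((((hε.pow 2).const_mul _).div (hh.mul (hh.const_add 1)) (by norm_num)).add
      ((((hc.const_mul a).mul_const q).mul_const κ).div hh one_ne_zero)).div_const v)
  simp only [zero_pow two_ne_zero, mul_zero, zero_div, zero_add, mul_one, div_one] at hlim
  refine hlim.congr' ?_
  filter_upwards [self_mem_nhdsWithin, hh.eventually_const_lt zero_lt_one] with ε hε0 hpos
  have hε0 : 0 < ε := hε0
  have hfac : √(v - (κ * ε ^ 2) ^ 2 * v) = √v * √(1 - (κ * ε ^ 2) ^ 2) := by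
    rw [← Real.sqrt_mul hv.le]
    ring_nf
  have hsq : √(1 - (κ * ε ^ 2) ^ 2) ^ 2 = 1 - (κ * ε ^ 2) ^ 2 :=
    Real.sq_sqrt (Real.sqrt_pos.1 hpos).le
  rw [hfac]
  set h := √(1 - (κ * ε ^ 2) ^ 2)
  have hs : 0 < √v := Real.sqrt_pos.2 hv
  have hv' : v = √v ^ 2 := (Real.sq_sqrt hv.le).symm
  have hne : 1 + h ≠ 0 := by positivity
  rw [hv', Real.sqrt_sq hs.le]
  field_simp
  linear_combination a ^ 2 * hsq

section hittingTime

variable {Ω : Type*} [MeasurableSpace Ω] {P : Measure Ω} {B : ℝ → Ω → ℝ} {lam x₀ ε q t : ℝ}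
  {θ : Ω → ℝ} {F : Set Ω}

lemma ae_hitting_le_iff (hB : IsBrownianMotion P B) (hlam : 0 < lam) (hx₀ : x₀ < 0) (hq : 0 < q)
    (hθ : ∀ ω, θ ω = sInf {t | 0 ≤ t ∧ unstableOU B lam x₀ ε t ω = q})
    (hF : F = {ω | 0 < x₀ + ε * B (1 / (2 * lam)) ω}) :
    ∀ᵐ ω ∂P, ω ∈ F → ∀ t, θ ω ≤ t ↔ ∃ r ∈ Icc 0 t, q ≤ unstableOU B lam x₀ ε r ω := by
  filter_upwards [hB.2.1] with ω hω hωF t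
  rw [hF] at hωF
  rw [hθ]
  refine sInf_hitting_le_iff (X := fun r => unstableOU B lam x₀ ε r ω)
    (continuousOn_exp_mul_clock hlam hω.2 x₀ ε) ?_ (tendsto_exp_mul_clock hlam hω.2 hωF)
  simp only [unstableOU, clock_zero, hω.1, mul_zero, Real.exp_zero, add_zero, one_mul]
  exact hx₀.trans hq

lemma measurable_indicator_hitting (hPc : P.IsComplete) (hB : IsBrownianMotion P B)
    (hlam : 0 < lam) (hx₀ : x₀ < 0) (hq : 0 < q)
    (hθ : ∀ ω, θ ω = sInf {t | 0 ≤ t ∧ unstableOU B lam x₀ ε t ω = q})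
    (hF : F = {ω | 0 < x₀ + ε * B (1 / (2 * lam)) ω}) (hFm : MeasurableSet F) :
    Measurable (F.indicator θ) := by
  classical
  have hθ0 : ∀ ω, 0 ≤ θ ω := fun ω => by
    rw [hθ]
    exact Real.sInf_nonneg fun r hr => hr.1
  refine measurable_of_Iic fun t => ?_
  rcases lt_or_ge t 0 with ht | ht
  · convert MeasurableSet.empty
    refine eq_empty_of_forall_notMem fun ω hω => ?_
    have h1 : F.indicator θ ω ≤ t := hω
    linarith [indicator_nonneg (fun ω _ => hθ0 ω) (s := F) ω]
  · let V : Set Ω := ⋂ m : ℕ, ⋃ n : ℕ, ⋃ k : ℕ, ⋃ _ : k ≤ n,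
      {ω | q - 1 / (m + 1 : ℝ) < unstableOU B lam x₀ ε (k / n * t) ω}
    have hV : MeasurableSet V :=
      MeasurableSet.iInter fun m => MeasurableSet.iUnion fun n => MeasurableSet.iUnion fun k =>
        MeasurableSet.iUnion fun _ => measurableSet_lt measurable_const (measurable_unstableOU hB)
    have hnull : NullMeasurableSet (F.indicator θ ⁻¹' Iic t) P := by
      refine (hFm.compl.union hV).nullMeasurableSet.congr ?_
      filter_upwards [hB.2.1, ae_hitting_le_iff hB hlam hx₀ hq hθ hF] with ω hω hhit
      refine propext ?_
      change (ω ∈ Fᶜ ∪ V) ↔ F.indicator θ ω ≤ t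
      by_cases hωF : ω ∈ F
      · rw [indicator_of_mem hωF, hhit hωF,
          exists_le_iff_forall_exists_grid (X := fun r => unstableOU B lam x₀ ε r ω)
            (continuousOn_exp_mul_clock hlam hω.2 x₀ ε) ht]
        simp [V, hωF]
      · simp [hωF, ht]
    exact hnull.measurable_of_complete

end hittingTime

/-- The tail ratio `P(c q ≤ X_ε(t_ε)) / P(F_ε)` when `e^{-λ t_ε} = κ ε²`. -/
lemma tendsto_measureReal_le_unstableOU_div {Ω : Type*} [MeasurableSpace Ω] {P : Measure Ω}
    [IsProbabilityMeasure P] {B : ℝ → Ω → ℝ} (hB : IsBrownianMotion P B) {lam x₀ q κ : ℝ}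
    (hlam : 0 < lam) (hx₀ : x₀ < 0) {t c : ℝ → ℝ} (hc : Tendsto c (𝓝[>] 0) (𝓝 1))
    (ht : ∀ᶠ ε in 𝓝[>] 0, 0 < t ε)
    (hκ : ∀ᶠ ε in 𝓝[>] 0, Real.exp (-(lam * t ε)) = κ * ε ^ 2) :
    Tendsto (fun ε => P.real {ω | c ε * q ≤ unstableOU B lam x₀ ε (t ε) ω} /
        P.real {ω | 0 < x₀ + ε * B (1 / (2 * lam)) ω}) (𝓝[>] 0)
      (𝓝 (Real.exp (-(-x₀ * q * κ / (1 / (2 * lam)))))) := by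
  have hT : (0 : ℝ) < 1 / (2 * lam) := by positivity
  have hx : Tendsto (fun ε : ℝ => -x₀ / ε / √(1 / (2 * lam))) (𝓝[>] 0) atTop :=
    (tendsto_inv_nhdsGT_zero.const_mul_atTop (neg_pos.2 hx₀)).atTop_div_const (Real.sqrt_pos.2 hT)
  refine (tendsto_gaussianReal_real_Ici_div hx
    (tendsto_mul_level_sub_level (a := -x₀) (q := q) (κ := κ) hT hc)).congr' ?_
  filter_upwards [self_mem_nhdsWithin, ht, hκ] with ε hε htε hκε
  have hε : 0 < ε := hε
  have hclock : clock lam (t ε) = 1 / (2 * lam) - (κ * ε ^ 2) ^ 2 * (1 / (2 * lam)) := by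
    have := sub_clock (lam := lam) (t ε)
    rw [hκε] at this
    linarith [mul_one_div ((κ * ε ^ 2) ^ 2) (2 * lam)]
  have hpos : 0 < clock lam (t ε) := by
    refine div_pos (sub_pos.2 (Real.exp_lt_one_iff.2 ?_)) (by positivity)
    exact neg_neg_of_pos (by positivity)
  simp only [le_unstableOU_iff hε]
  rw [hB.measureReal_le hpos, hclock, hκε]
  have hF : {ω | 0 < x₀ + ε * B (1 / (2 * lam)) ω} = {ω | -x₀ / ε < B (1 / (2 * lam)) ω} := by
    ext ω
    change 0 < x₀ + ε * B (1 / (2 * lam)) ω ↔ -x₀ / ε < B (1 / (2 * lam)) ω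
    rw [div_lt_iff₀ hε]
    constructor <;> intro h <;> linarith
  rw [hF, hB.measureReal_lt hT]

/-- Convergence of the conditional distribution functions of the centred hitting time. -/
lemma tendsto_cond_hitting_le {Ω : Type*} [MeasurableSpace Ω] {P : Measure Ω}
    [IsProbabilityMeasure P] {B : ℝ → Ω → ℝ} (hB : IsBrownianMotion P B) {lam x₀ q : ℝ}
    (hlam : 0 < lam) (hx₀ : x₀ < 0) (hq : 0 < q) {θ : ℝ → Ω → ℝ} {F : ℝ → Set Ω}
    (hθ : ∀ ε ω, θ ε ω = sInf {t | 0 ≤ t ∧ unstableOU B lam x₀ ε t ω = q})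
    (hF : ∀ ε, F ε = {ω | 0 < x₀ + ε * B (1 / (2 * lam)) ω}) (y : ℝ) :
    Tendsto (fun ε => P.real (F ε ∩ {ω | θ ε ω - (2 / lam) * Real.log (1 / ε) ≤ y}) /
        P.real (F ε)) (𝓝[>] 0)
      (𝓝 (Real.exp (-(-x₀ * q * Real.exp (-(lam * y)) / (1 / (2 * lam)))))) := by
  let t : ℝ → ℝ := fun ε => y + (2 / lam) * Real.log (1 / ε)
  have hε : Tendsto (fun ε : ℝ => ε) (𝓝[>] 0) (𝓝 0) := tendsto_nhdsWithin_of_tendsto_nhds tendsto_id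
  have hsqrt : Tendsto (fun ε : ℝ => √ε) (𝓝[>] 0) (𝓝 0) := by
    simpa [Function.comp_def] using (Real.continuous_sqrt.tendsto 0).comp hε
  have ht : ∀ᶠ ε in 𝓝[>] 0, 0 < t ε := by
    have : Tendsto t (𝓝[>] 0) atTop := by
      refine tendsto_atTop_add_const_left _ _ ((Real.tendsto_log_atTop.comp ?_).const_mul_atTop
        (by positivity))
      exact (tendsto_inv_nhdsGT_zero (𝕜 := ℝ)).congr fun ε => (one_div ε).symm
    exact this.eventually_gt_atTop 0
  have hκ : ∀ᶠ ε in 𝓝[>] 0, Real.exp (-(lam * t ε)) = Real.exp (-(lam * y)) * ε ^ 2 := by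
    filter_upwards [self_mem_nhdsWithin] with ε hε
    have hε : 0 < ε := hε
    have : -(lam * t ε) = -(lam * y) + (2 : ℕ) * Real.log ε := by
      simp only [t]
      rw [one_div, Real.log_inv]
      field_simp
      push_cast
      ring
    rw [this, Real.exp_add, Real.exp_nat_mul, Real.exp_log hε]
  have hlow := tendsto_measureReal_le_unstableOU_div hB hlam hx₀ (q := q)
    (tendsto_const_nhds (x := (1 : ℝ))) ht hκ
  have hc : Tendsto (fun ε : ℝ => 1 - 2 * √ε) (𝓝[>] 0) (𝓝 1) := by
    simpa using (hsqrt.const_mul 2).const_sub 1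
  have hup := tendsto_measureReal_le_unstableOU_div hB hlam hx₀ (q := q) hc ht hκ
  have hη' : Tendsto (fun ε : ℝ => 1 - ε ^ 2 / (2 * lam * q ^ 2)) (𝓝[>] 0) (𝓝 1) := by
    simpa using ((hε.pow 2).div_const (2 * lam * q ^ 2)).const_sub 1
  have hη : Tendsto (fun ε : ℝ => 1 - ε / (2 * lam * q ^ 2)) (𝓝[>] 0) (𝓝 1) := by
    simpa using (hε.div_const (2 * lam * q ^ 2)).const_sub 1
  have hlow' := hη'.mul hlow
  have hup' := hup.div hη one_ne_zero
  simp only [one_mul] at hlow'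
  rw [div_one] at hup'
  have hset : ∀ ε, {ω | θ ε ω - (2 / lam) * Real.log (1 / ε) ≤ y} = {ω | θ ε ω ≤ t ε} := fun ε =>
    Set.ext fun ω => (sub_le_iff_le_add : θ ε ω - (2 / lam) * Real.log (1 / ε) ≤ y ↔ _)
  refine tendsto_of_tendsto_of_tendsto_of_le_of_le' hlow' hup' ?_ ?_
  · filter_upwards [self_mem_nhdsWithin, ht] with ε hε htε
    have hε : 0 < ε := hε
    rw [hset, ← mul_div_assoc, ← hF]
    gcongr
    refine (one_sub_mul_measureReal_le (by positivity)
      (mul_measure_le_unstableOU_le hB hlam hε hq htε.le)).trans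
      (ENNReal.toReal_mono (measure_ne_top _ _) (measure_mono_ae ?_))
    rw [← hF]
    filter_upwards [ae_hitting_le_iff hB hlam hx₀ hq (hθ ε) (hF ε)] with ω hω
    rintro ⟨hωF, hωq⟩
    exact ⟨hωF, (hω hωF _).2 ⟨t ε, ⟨htε.le, le_rfl⟩, hωq⟩⟩
  · filter_upwards [self_mem_nhdsWithin, ht, hη.eventually_const_lt zero_lt_one,
      hc.eventually_const_lt zero_lt_one] with ε hε htε hηε hδε
    have hε : 0 < ε := hε
    simp only [Pi.div_apply]
    rw [hset, div_right_comm, ← hF]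
    gcongr
    rw [le_div_iff₀' hηε]
    have hb := one_sub_mul_measureReal_le (by positivity)
      (mul_measure_exists_le_unstableOU_le (x₀ := x₀) hB hlam hε (Real.sqrt_pos.2 hε)
        (by linarith) hq htε.le)
    rw [Real.sq_sqrt hε.le, (by field_simp : ε ^ 2 / (2 * lam * q ^ 2 * ε)
      = ε / (2 * lam * q ^ 2))] at hb
    refine le_trans (mul_le_mul_of_nonneg_left ?_ hηε.le) hb
    refine ENNReal.toReal_mono (measure_ne_top _ _) (measure_mono_ae ?_)
    filter_upwards [ae_hitting_le_iff hB hlam hx₀ hq (hθ ε) (hF ε)] with ω hω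
    rintro ⟨hωF, hωq⟩
    exact (hω hωF _).1 hωq

/-- With `F_ε = {x₀ + ε B(1/(2λ)) > 0}` and `θ_ε = inf{t ≥ 0 : X_ε(t) = q₊}`, the
conditional law `Law[θ_ε - (2/λ) ln(1/ε) | F_ε]` converges weakly, as `ε → 0⁺`, to the law
of `(1/λ) ln(2 λ q₊ |x₀|) + (1/λ) Z` with `Z` standard Gumbel. -/
theorem gumbel_limit_conditioned_on_F
    {Ω : Type*} [MeasurableSpace Ω] (P : Measure Ω) [IsProbabilityMeasure P]
    (hPc : P.IsComplete)
    (B : ℝ → Ω → ℝ) (hB : IsBrownianMotion P B)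
    (lam qm x₀ qp : ℝ) (hlam : 0 < lam) (hqm : qm < x₀) (hx₀ : x₀ < 0) (hqp : 0 < qp)
    (X : ℝ → ℝ → Ω → ℝ)
    (hX : ∀ ε t ω, X ε t ω
      = Real.exp (lam * t) * (x₀ + ε * B ((1 - Real.exp (-(2 * lam * t))) / (2 * lam)) ω))
    (θ : ℝ → Ω → ℝ)
    (hθ : ∀ ε ω, θ ε ω = sInf {t | 0 ≤ t ∧ X ε t ω = qp})
    (F : ℝ → Set Ω)
    (hF : ∀ ε, F ε = {ω | 0 < x₀ + ε * B (1 / (2 * lam)) ω})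
    -- `Z` is a standard Gumbel random variable on an auxiliary probability space
    {Ω' : Type*} [MeasurableSpace Ω'] (P' : Measure Ω') [IsProbabilityMeasure P']
    (Z : Ω' → ℝ) (hZmeas : Measurable Z)
    (hZ : ∀ x : ℝ, (P' {ω' | Z ω' ≤ x}).toReal = Real.exp (-Real.exp (-x))) :
    ∀ f : BoundedContinuousFunction ℝ ℝ,
      Tendsto
        (fun ε : ℝ => ∫ ω, f (θ ε ω - (2 / lam) * Real.log (1 / ε)) ∂(P[|F ε]))
        (𝓝[>] 0)
        (𝓝 (∫ ω', f ((1 / lam) * Real.log (2 * lam * qp * |x₀|) + (1 / lam) * Z ω') ∂P')) := by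
  intro f
  obtain rfl : X = fun ε t ω => unstableOU B lam x₀ ε t ω := by
    funext ε t ω
    exact hX ε t ω
  have hFm : ∀ ε, MeasurableSet (F ε) := fun ε => by
    rw [hF]
    exact measurableSet_lt measurable_const (((hB.1 _).const_mul ε).const_add x₀)
  have hFpos : ∀ ε, 0 < ε → P (F ε) ≠ 0 := fun ε hε h0 => by
    have hT : (0 : ℝ) < 1 / (2 * lam) := by positivity
    have h1 := hB.measureReal_lt hT (-x₀ / ε)
    have h2 : {ω | -x₀ / ε < B (1 / (2 * lam)) ω} = F ε := by
      rw [hF]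
      ext ω
      change -x₀ / ε < B (1 / (2 * lam)) ω ↔ 0 < x₀ + ε * B (1 / (2 * lam)) ω
      rw [div_lt_iff₀ hε]
      constructor <;> intro h <;> linarith
    rw [h2, Measure.real, h0, ENNReal.toReal_zero, eq_comm, measureReal_eq_zero_iff] at h1
    have h3 := gaussianReal_absolutelyContinuous' 0 one_ne_zero h1
    simp at h3
  let c : ℝ → ℝ := fun ε => (2 / lam) * Real.log (1 / ε)
  have hmeas : ∀ ε, AEMeasurable (fun ω => θ ε ω - c ε) (P[|F ε]) := fun ε => by
    have hm := measurable_indicator_hitting hPc hB hlam hx₀ hqp (hθ ε) (hF ε) (hFm ε)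
    refine AEMeasurable.sub_const ⟨_, hm, ?_⟩ _
    filter_upwards [ae_cond_mem (hFm ε)] with ω hω
    rw [indicator_of_mem hω]
  let μ : ℝ → Measure ℝ := fun ε =>
    if 0 < ε then (P[|F ε]).map (fun ω => θ ε ω - c ε) else Measure.dirac 0
  have hμ : ∀ ε, 0 < ε → μ ε = (P[|F ε]).map (fun ω => θ ε ω - c ε) := fun ε hε => if_pos hε
  have hμprob : ∀ ε, IsProbabilityMeasure (μ ε) := fun ε => by
    by_cases hε : 0 < ε
    · have := cond_isProbabilityMeasure (hFpos ε hε)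
      rw [hμ ε hε]
      exact Measure.isProbabilityMeasure_map (hmeas ε)
    · simp only [μ, if_neg hε]
      infer_instance
  let g : Ω' → ℝ := fun ω' => (1 / lam) * Real.log (2 * lam * qp * |x₀|) + (1 / lam) * Z ω'
  have hg : Measurable g := (hZmeas.const_mul _).const_add _
  have hνprob : IsProbabilityMeasure (P'.map g) := Measure.isProbabilityMeasure_map hg.aemeasurable
  have hcdf : ∀ y, Tendsto (fun ε => (μ ε).real (Iic y)) (𝓝[>] 0) (𝓝 ((P'.map g).real (Iic y))) := by
    intro y
    have hlim : (P'.map g).real (Iic y)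
        = Real.exp (-(-x₀ * qp * Real.exp (-(lam * y)) / (1 / (2 * lam)))) := by
      have hpos : 0 < 2 * lam * qp * |x₀| := by
        have := abs_pos.2 hx₀.ne
        positivity
      have hpre : g ⁻¹' Iic y = {ω' | Z ω' ≤ lam * y - Real.log (2 * lam * qp * |x₀|)} := by
        ext ω'
        change g ω' ≤ y ↔ Z ω' ≤ lam * y - Real.log (2 * lam * qp * |x₀|)
        simp only [g]
        rw [← mul_add, one_div, inv_mul_le_iff₀ hlam]
        constructor <;> intro h <;> linarith
      rw [map_measureReal_apply hg measurableSet_Iic, hpre, Measure.real, hZ, neg_sub, sub_eq_add_neg,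
        Real.exp_add, Real.exp_log hpos, abs_of_neg hx₀]
      congr 1
      field_simp
    rw [hlim]
    refine (tendsto_cond_hitting_le hB hlam hx₀ hqp hθ hF y).congr' ?_
    filter_upwards [self_mem_nhdsWithin] with ε hε
    rw [hμ ε hε, map_measureReal_apply_of_aemeasurable (hmeas ε) measurableSet_Iic,
      measureReal_def (P[|F ε]), cond_apply (hFm ε), ENNReal.toReal_mul, ENNReal.toReal_inv, div_eq_inv_mul]
    rfl
  have hmain := tendsto_integral_of_tendsto_measureReal_Iic hcdf f
  rw [integral_map hg.aemeasurable f.continuous.aestronglyMeasurable] at hmain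
  refine hmain.congr' ?_
  filter_upwards [self_mem_nhdsWithin] with ε hε
  rw [hμ ε hε, integral_map (hmeas ε) f.continuous.aestronglyMeasurable]
end

section
/- Define J_ε = ε·e^{−μτ_ε}·B²((e^{2μτ_ε} − 1)/(2μ)) (the noise contribution to X²_ε(τ_ε)). Then, as ε → 0⁺, the conditional law Law[J_ε/ε | C_ε] converges weakly to the law of N/√(2μ), where N is a standard Gaussian random variable. -/
open MeasureTheory ProbabilityTheory Filter Topology Set

open scoped NNReal ENNReal BoundedContinuousFunction

theorem IsBrownianMotion.isPreBrownianReal {Ω : Type*} [MeasurableSpace Ω] {P : Measure Ω}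
    {B : ℝ → Ω → ℝ} (hB : IsBrownianMotion P B) :
    IsPreBrownianReal (fun (t : ℝ≥0) => B t) P := by
  obtain ⟨hmeas, hcont, hlaw, hind⟩ := hB
  refine HasIndepIncrements.isPreBrownianReal_of_hasLaw (fun t => ⟨(hmeas t).aemeasurable, ?_⟩)
    (HasIndepIncrements.of_nat fun t ht _ => hind (fun i => t i)
      (fun i j h => by exact_mod_cast ht h) fun i => (t i).2)
  have h := hlaw 0 t le_rfl t.2
  rw [sub_zero, Real.toNNReal_coe] at h
  rw [← h]
  refine Measure.map_congr ?_
  filter_upwards [hcont] with ω hω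
  simp [hω.1]

/-- A centered Gaussian variable is nonnegative with probability at least one half. -/
theorem gaussianReal_zero_Ici_zero (v : ℝ≥0) : 1 ≤ 2 * gaussianReal 0 v (Ici 0) := by
  have hneg : gaussianReal 0 v (Iic 0) = gaussianReal 0 v (Ici 0) := by
    have h := gaussianReal_map_neg (μ := 0) (v := v)
    rw [neg_zero] at h
    nth_rewrite 1 [← h]
    rw [Measure.map_apply (by fun_prop) measurableSet_Iic]
    congr 1
    ext x
    simp
  calc (1 : ℝ≥0∞) = gaussianReal 0 v (Iic 0 ∪ Ici 0) := by simp
    _ ≤ gaussianReal 0 v (Iic 0) + gaussianReal 0 v (Ici 0) := measure_union_le _ _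
    _ = 2 * gaussianReal 0 v (Ici 0) := by rw [hneg, two_mul]

/-- **Lévy's inequality** for a Brownian motion along a finite increasing grid. -/
theorem ProbabilityTheory.IsPreBrownianReal.measure_exists_grid_lt_le {Ω : Type*}
    [MeasurableSpace Ω] {P : Measure Ω} {B : ℝ≥0 → Ω → ℝ} (hB : IsPreBrownianReal B P)
    (hm : ∀ t, Measurable (B t))
    {t : ℕ → ℝ≥0} (ht : Monotone t) {S : ℝ≥0} {n : ℕ} (hS : ∀ k ≤ n, t k ≤ S) (a : ℝ) :
    P (⋃ k ≤ n, {ω | a < B (t k) ω}) ≤ 2 * P {ω | a ≤ B S ω} := by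
  let A : ℕ → Set Ω := fun k => {ω | a < B (t k) ω ∧ ∀ j < k, B (t j) ω ≤ a}
  have hA : ∀ k, MeasurableSet (A k) := fun k => by
    simp only [A, ofPred_and, ofPred_forall]
    exact (measurableSet_lt measurable_const (hm _)).inter
      (.iInter fun j => .iInter fun _ => measurableSet_le (hm _) measurable_const)
  have hdisj : Pairwise (Function.onFun Disjoint A) := by
    intro i j hij
    rw [Function.onFun, Set.disjoint_left]
    rintro ω ⟨h1, h2⟩ ⟨h3, h4⟩
    rcases lt_or_gt_of_ne hij with h | h
    · exact absurd (h4 i h) (not_le.2 h1)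
    · exact absurd (h2 j h) (not_le.2 h3)
  have hsub : (⋃ k ≤ n, {ω | a < B (t k) ω}) ⊆ ⋃ k ∈ Finset.range (n + 1), A k := by
    intro ω hω
    simp only [mem_iUnion, mem_ofPred_eq, exists_prop] at hω
    classical
    have hex : ∃ k, a < B (t k) ω := hω.imp fun _ h => h.2
    obtain ⟨k, hk, hka⟩ := hω
    simp only [mem_iUnion, Finset.mem_range, exists_prop]
    exact ⟨Nat.find hex, Nat.lt_succ_of_le ((Nat.find_min' hex hka).trans hk), Nat.find_spec hex,
      fun j hj => not_lt.1 (Nat.find_min hex hj)⟩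
  let D : ℕ → Set Ω := fun k => {ω | 0 ≤ B S ω - B (t k) ω}
  have hD : ∀ k, MeasurableSet (D k) := fun k => measurableSet_le measurable_const (by fun_prop)
  have hhalf : ∀ k ≤ n, P (A k) ≤ 2 * P (A k ∩ D k) := by
    intro k hk
    have hind := hB.indepFun_shift (t k)
    have hadd : t k + (S - t k) = S := add_tsub_cancel_of_le (hS k hk)
    have hprod : P (D k ∩ A k) = P (D k) * P (A k) := by
      have := hind.measure_inter_preimage_eq_mul
        {x | 0 ≤ x (S - t k)}
        {y | a < y ⟨t k, self_mem_Iic⟩ ∧ ∀ j, ∀ hj : j < k, y ⟨t j, ht hj.le⟩ ≤ a}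
        (measurableSet_le measurable_const (measurable_pi_apply _))
        (by
          simp only [ofPred_and, ofPred_forall]
          exact (measurableSet_lt measurable_const (measurable_pi_apply _)).inter
            (.iInter fun j => .iInter fun _ =>
              measurableSet_le (measurable_pi_apply _) measurable_const))
      simpa [D, A, hadd] using this
    have hlaw : P (D k) = gaussianReal 0 (nndist (S : ℝ) (t k : ℝ)) (Ici 0) := by
      have h := (hB.hasLaw_sub S (t k)).map_eq
      simp only [NNReal.val_eq_coe] at h
      rw [← h, Measure.map_apply (by fun_prop) measurableSet_Ici]
      rfl
    rw [inter_comm, hprod, hlaw, ← mul_assoc]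
    calc P (A k) = 1 * P (A k) := (one_mul _).symm
      _ ≤ _ := mul_le_mul_left (gaussianReal_zero_Ici_zero _) _
  calc P (⋃ k ≤ n, {ω | a < B (t k) ω}) ≤ P (⋃ k ∈ Finset.range (n + 1), A k) := measure_mono hsub
    _ ≤ ∑ k ∈ Finset.range (n + 1), P (A k) := measure_biUnion_finset_le _ _
    _ ≤ ∑ k ∈ Finset.range (n + 1), 2 * P (A k ∩ D k) :=
      Finset.sum_le_sum fun k hk => hhalf k (Nat.lt_succ_iff.1 (Finset.mem_range.1 hk))
    _ = 2 * P (⋃ k ∈ Finset.range (n + 1), A k ∩ D k) := by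
      rw [← Finset.mul_sum, measure_biUnion_finset
        (fun i _ j _ hij => (hdisj hij).mono inter_subset_left inter_subset_left)
        (fun k _ => (hA k).inter (hD k))]
    _ ≤ 2 * P {ω | a ≤ B S ω} := by
      gcongr
      refine iUnion₂_subset fun k _ ω hω => ?_
      have h1 : a < B (t k) ω := hω.1.1
      have h2 : 0 ≤ B S ω - B (t k) ω := hω.2
      rw [mem_ofPred_eq]
      linarith

/-- **Lévy's inequality** for the running maximum of a Brownian motion. -/
theorem ProbabilityTheory.IsBrownianReal.measure_exists_lt_le {Ω : Type*} [MeasurableSpace Ω]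
    {P : Measure Ω} {B : ℝ≥0 → Ω → ℝ} (hB : IsBrownianReal B P) (hm : ∀ t, Measurable (B t))
    (S : ℝ≥0) (a : ℝ) :
    P {ω | ∃ s ≤ S, a < B s ω} ≤ 2 * P {ω | a ≤ B S ω} := by
  rcases eq_or_ne S 0 with rfl | hS0
  · refine (measure_mono ?_).trans (le_mul_of_one_le_left' one_le_two)
    rintro ω ⟨s, hs, h⟩
    rw [nonpos_iff_eq_zero.1 hs] at h
    exact h.le
  let E : ℕ → Set Ω := fun n => ⋃ k : ℕ, ⋃ _ : k ≤ 2 ^ n, {ω | a < B (S * (k / 2 ^ n)) ω}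
  have hE : ∀ n, P (E n) ≤ 2 * P {ω | a ≤ B S ω} := fun n => by
    refine hB.toIsPreBrownianReal.measure_exists_grid_lt_le hm
      (t := fun k => S * (k / 2 ^ n)) (fun i j h => by dsimp only; gcongr) (fun k hk => ?_) a
    refine mul_le_of_le_one_right' (div_le_one_of_le₀ ?_ (by positivity))
    exact_mod_cast hk
  have hmono : Monotone E := by
    refine monotone_nat_of_le_succ fun n => iUnion₂_subset fun k hk ω hω => ?_
    simp only [E, mem_iUnion, exists_prop]
    refine ⟨2 * k, by rw [pow_succ]; lia, ?_⟩
    convert hω using 4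
    push_cast
    rw [pow_succ]
    field_simp
  have hsub : {ω | ∃ s ≤ S, a < B s ω} ≤ᵐ[P] ⋃ n, E n := by
    filter_upwards [hB.cont] with ω hω
    rintro ⟨s, hs, h⟩
    have hlim : Tendsto (fun n : ℕ => S * ((⌊(s / S : ℝ) * 2 ^ n⌋₊ : ℝ≥0) / 2 ^ n)) atTop
        (𝓝 (S * (s / S))) := by
      rw [← NNReal.tendsto_coe]
      push_cast
      exact ((tendsto_nat_floor_mul_div_atTop (R := ℝ) (a := s / S) (by positivity)).comp
        (tendsto_pow_atTop_atTop_of_one_lt (r := (2 : ℝ)) one_lt_two)).const_mul _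
    rw [mul_div_cancel₀ _ hS0] at hlim
    obtain ⟨n, hn⟩ := (((hω.tendsto s).comp hlim).eventually (lt_mem_nhds h)).exists
    refine mem_iUnion.2 ⟨n, mem_iUnion₂.2 ⟨_, ?_, hn⟩⟩
    refine Nat.floor_le_of_le ?_
    push_cast
    exact mul_le_of_le_one_left (by positivity) (div_le_one_of_le₀ (mod_cast hs) S.2)
  refine (measure_mono_ae hsub).trans ?_
  rw [hmono.measure_iUnion]
  exact iSup_le hE

theorem IsBrownianMotion.isBrownianReal {Ω : Type*} [MeasurableSpace Ω] {P : Measure Ω}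
    {B : ℝ → Ω → ℝ} (hB : IsBrownianMotion P B) :
    IsBrownianReal (fun (t : ℝ≥0) => B t) P where
  toIsPreBrownianReal := hB.isPreBrownianReal
  cont := by
    filter_upwards [hB.2.1] with ω hω
    exact hω.2.comp_continuous NNReal.continuous_coe fun t => t.2

/-- The Brownian bridge on `[0, S]` is independent of the value of the motion at time `S`. -/
theorem ProbabilityTheory.IsPreBrownianReal.indepFun_bridge {Ω : Type*} [MeasurableSpace Ω]
    {P : Measure Ω} {B : ℝ≥0 → Ω → ℝ} (hB : IsPreBrownianReal B P) {S : ℝ≥0} (hS : S ≠ 0) :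
    IndepFun (fun ω (s : Iic S) => B s ω - s / S * B S ω) (B S) P := by
  have hprob := hB.isGaussianProcess.isProbabilityMeasure
  have hmem : ∀ t, MemLp (B t) 2 P := fun t =>
    (hB.isGaussianProcess.hasGaussianLaw_eval t).memLp_two
  have h : IndepFun (fun ω (s : Iic S) => B s ω - s / S * B S ω) (fun ω (_ : Unit) => B S ω) P := by
    classical
    apply IsGaussianProcess.indepFun_of_covariance_eq_zero
      (X := fun (s : Iic S) ω => B s ω - s / S * B S ω) (Y := fun (_ : Unit) ω => B S ω)
    · apply hB.isGaussianProcess.of_isGaussianProcess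
      rintro (s | _)
      · exact ⟨{s.1, S},
          { toFun x := x ⟨s.1, by simp⟩ - s / S * x ⟨S, by simp⟩
            map_add' x y := by simp; ring
            map_smul' c x := by simp; ring }, by simp⟩
      · exact ⟨{S},
          { toFun x := x ⟨S, by simp⟩
            map_add' x y := by simp
            map_smul' c x := by simp }, by simp⟩
    · exact fun s => (hB.aemeasurable _).sub ((hB.aemeasurable _).const_mul _)
    · exact fun _ => hB.aemeasurable _
    · rintro ⟨s, hs⟩ _
      rw [covariance_fun_sub_left (hmem _) ((hmem _).const_mul _) (hmem _),
        covariance_const_mul_left, hB.covariance_fun_eval, hB.covariance_fun_eval, min_self,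
        min_eq_left hs]
      have : (S : ℝ) ≠ 0 := by exact_mod_cast hS
      field_simp
      simp
  exact h.comp measurable_id (measurable_pi_apply ())

/-- Conditionally on being large at time `S`, a Brownian motion stays above the chord from the
origin, up to a constant, with probability at least one half. -/
theorem ProbabilityTheory.IsBrownianReal.exists_measure_le_two_mul_bridge {Ω : Type*}
    [MeasurableSpace Ω] {P : Measure Ω} {B : ℝ≥0 → Ω → ℝ} (hB : IsBrownianReal B P)
    {S : ℝ≥0} (hS : S ≠ 0) :
    ∃ K : ℝ, ∀ a : ℝ, P {ω | a ≤ B S ω} ≤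
      2 * P {ω | a ≤ B S ω ∧ ∀ s ≤ S, -K ≤ B s ω - s / S * B S ω} := by
  have hprob := hB.isGaussianProcess.isProbabilityMeasure
  obtain ⟨D, hDc, hDd⟩ := TopologicalSpace.exists_countable_dense (Iic S)
  let G : ℕ → Set Ω := fun K => {ω | ∀ s ∈ D, -(K : ℝ) ≤ B s ω - s / S * B S ω}
  have hG : Monotone G := by
    intro K L hKL ω hω s hs
    have h := hω s hs
    have : (K : ℝ) ≤ L := by exact_mod_cast hKL
    linarith
  have hae : P (⋃ K, G K) = 1 := by
    rw [← measure_univ (μ := P)]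
    refine measure_congr (eventuallyEq_univ.2 ?_)
    filter_upwards [hB.cont] with ω hω
    have hc : Continuous fun s : ℝ≥0 => B s ω - s / S * B S ω := by fun_prop
    obtain ⟨c, hc⟩ := (isCompact_Icc (a := 0) (b := S)).bddBelow_image hc.continuousOn
    obtain ⟨K, hK⟩ := exists_nat_ge (-c)
    refine mem_iUnion.2 ⟨K, fun s _ => ?_⟩
    have := hc ⟨s, ⟨zero_le, s.2⟩, rfl⟩
    dsimp only at this
    linarith
  obtain ⟨K, hK⟩ : ∃ K, (2 : ℝ≥0∞)⁻¹ < P (G K) := by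
    have h := tendsto_measure_iUnion_atTop (μ := P) hG
    rw [hae] at h
    exact (h.eventually (lt_mem_nhds (ENNReal.inv_lt_one.2 ENNReal.one_lt_two))).exists
  refine ⟨K, fun a => ?_⟩
  have hprod : P (G K ∩ {ω | a ≤ B S ω}) = P (G K) * P {ω | a ≤ B S ω} := by
    refine (hB.toIsPreBrownianReal.indepFun_bridge hS).measure_inter_preimage_eq_mul
      {x | ∀ s ∈ D, -(K : ℝ) ≤ x s} (Ici a) ?_ measurableSet_Ici
    simp only [ofPred_forall]
    exact .biInter hDc fun s _ => measurableSet_le measurable_const (measurable_pi_apply _)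
  have hsub : (G K ∩ {ω | a ≤ B S ω} : Set Ω) ≤ᵐ[P]
      {ω | a ≤ B S ω ∧ ∀ s ≤ S, -(K : ℝ) ≤ B s ω - s / S * B S ω} := by
    filter_upwards [hB.cont] with ω hω
    rintro ⟨h1, h2⟩
    refine ⟨h2, fun s hs => ?_⟩
    have hc : Continuous fun s : Iic S => B s ω - s / S * B S ω := by fun_prop
    have hcl : IsClosed {s : Iic S | -(K : ℝ) ≤ B s ω - s / S * B S ω} :=
      isClosed_le continuous_const hc
    have hmem : (⟨s, hs⟩ : Iic S) ∈ closure D := hDd _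
    exact hcl.closure_subset_iff.2 (fun s hs => h1 s hs) hmem
  calc P {ω | a ≤ B S ω} = 2 * 2⁻¹ * P {ω | a ≤ B S ω} := by
        rw [ENNReal.mul_inv_cancel two_ne_zero ENNReal.ofNat_ne_top, one_mul]
    _ ≤ 2 * P (G K) * P {ω | a ≤ B S ω} := by gcongr
    _ = 2 * P (G K ∩ {ω | a ≤ B S ω}) := by rw [hprod, mul_assoc]
    _ ≤ _ := by gcongr 2 * ?_; exact measure_mono_ae hsub

/-- The tail of a centered Gaussian law is negligible compared to that of one with a larger
variance. -/
theorem tendsto_gaussianReal_Ici_div_atTop {v w : ℝ≥0} (hv : v ≠ 0) (hvw : v < w) :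
    Tendsto (fun x => (gaussianReal 0 v).real (Ici x) / (gaussianReal 0 w).real (Ici x))
      atTop (𝓝 0) := by
  have hw : w ≠ 0 := (bot_lt_of_lt hvw).ne'
  have hv' : (0 : ℝ) < v := by exact_mod_cast pos_iff_ne_zero.2 hv
  have hvw' : (v : ℝ) < w := by exact_mod_cast hvw
  have hw' : (0 : ℝ) < w := hv'.trans hvw'
  have hup : ∀ x, 0 ≤ x → (gaussianReal 0 v).real (Ici x) ≤ Real.exp (-x ^ 2 / (2 * v)) := by
    intro x hx
    have hsub : HasSubgaussianMGF id v (gaussianReal 0 v) := by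
      refine ⟨fun t => integrable_exp_mul_gaussianReal t, fun t => ?_⟩
      rw [mgf_id_gaussianReal]
      simp
    exact hsub.measure_ge_le hx
  have hlow : ∀ x, 0 ≤ x →
      (√(2 * Real.pi * w))⁻¹ * Real.exp (-(x + 1) ^ 2 / (2 * w)) ≤
        (gaussianReal 0 w).real (Ici x) := by
    intro x hx
    calc (√(2 * Real.pi * w))⁻¹ * Real.exp (-(x + 1) ^ 2 / (2 * w))
        = ∫ y in Icc x (x + 1), (√(2 * Real.pi * w))⁻¹ * Real.exp (-(x + 1) ^ 2 / (2 * w)) := by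
          simp
      _ ≤ ∫ y in Icc x (x + 1), gaussianPDFReal 0 w y := by
          refine setIntegral_mono_on (integrableOn_const (by simp))
            (integrable_gaussianPDFReal 0 w).integrableOn
            measurableSet_Icc fun y hy => ?_
          rw [gaussianPDFReal, sub_zero]
          gcongr
          · exact hx.trans hy.1
          · exact hy.2
      _ = (gaussianReal 0 w).real (Icc x (x + 1)) := by
          rw [measureReal_def, gaussianReal_apply_eq_integral 0 hw,
            ENNReal.toReal_ofReal (integral_nonneg fun y => gaussianPDFReal_nonneg 0 w y)]
      _ ≤ _ := measureReal_mono Icc_subset_Ici_self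
  have hlim : Tendsto (fun x : ℝ => √(2 * Real.pi * w) *
      Real.exp (-x ^ 2 / (2 * v) + (x + 1) ^ 2 / (2 * w))) atTop (𝓝 0) := by
    rw [← mul_zero √(2 * Real.pi * w)]
    refine (Real.tendsto_exp_atBot.comp ?_).const_mul _
    have hfac : ∀ x : ℝ, -x ^ 2 / (2 * v) + (x + 1) ^ 2 / (2 * w) =
        x * (x * (-(1 / (2 * v) - 1 / (2 * w))) + 1 / w) + 1 / (2 * w) := fun x => by
      field_simp
      ring
    simp_rw [hfac]
    refine tendsto_atBot_add_const_right _ _ (tendsto_id.atTop_mul_atBot₀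
      (tendsto_atBot_add_const_right _ _ (tendsto_id.atTop_mul_const_of_neg ?_)))
    have : 1 / (2 * (w : ℝ)) < 1 / (2 * v) := by gcongr
    linarith
  refine squeeze_zero' (Eventually.of_forall fun x => by positivity) ?_ hlim
  filter_upwards [eventually_ge_atTop 0] with x hx
  calc (gaussianReal 0 v).real (Ici x) / (gaussianReal 0 w).real (Ici x)
      ≤ Real.exp (-x ^ 2 / (2 * v)) /
        ((√(2 * Real.pi * w))⁻¹ * Real.exp (-(x + 1) ^ 2 / (2 * w))) := by
        gcongr
        · exact hup x hx
        · exact hlow x hx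
    _ = _ := by
        rw [div_mul_eq_div_div, div_inv_eq_mul, mul_comm, mul_div_assoc, ← Real.exp_sub]
        congr 2
        ring

/-- Evaluation of a path at a time, as a limit along rational times; it is jointly measurable in
the time and the path, and agrees with the evaluation of paths that are continuous on `[0, ∞)`. -/
noncomputable def pathEval (t : ℝ) (b : ℝ → ℝ) : ℝ :=
  limsup (fun n : ℕ => b (⌊t * n⌋₊ / n)) atTop

theorem measurable_pathEval : Measurable fun p : ℝ × (ℝ → ℝ) => pathEval p.1 p.2 := by
  refine Measurable.limsup fun n => ?_
  have h : Measurable fun p : (ℝ → ℝ) × ℕ => p.1 (p.2 / n) :=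
    measurable_from_prod_countable_left fun k =>
      measurable_pi_apply ((k : ℝ) / n)
  exact h.comp (measurable_snd.prodMk
    (Nat.measurable_floor.comp (measurable_fst.mul_const _)))

theorem measurable_pathEval_comp {α : Type*} [MeasurableSpace α] {S : α → ℝ} {W : α → ℝ → ℝ}
    (hS : Measurable S) (hW : Measurable W) : Measurable fun a => pathEval (S a) (W a) :=
  Measurable.comp (g := fun p : ℝ × (ℝ → ℝ) => pathEval p.1 p.2) (f := fun a => (S a, W a))
    measurable_pathEval (hS.prodMk hW)

theorem pathEval_eq {b : ℝ → ℝ} (hb : ContinuousOn b (Ici 0)) {t : ℝ} (ht : 0 ≤ t) :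
    pathEval t b = b t := by
  refine Tendsto.limsup_eq ?_
  refine (hb t ht).tendsto.comp (tendsto_nhdsWithin_iff.2 ⟨?_, ?_⟩)
  · exact (tendsto_nat_floor_mul_div_atTop ht).comp tendsto_natCast_atTop_atTop
  · exact Eventually.of_forall fun n => mem_Ici.2 (by positivity)

/-- Paths that are bounded below by a positive constant at all rational times of `[0, q]`. -/
def positivePaths (q : ℚ) : Set (ℝ → ℝ) :=
  {h | ∃ n : ℕ, ∀ s : ℚ, 0 ≤ s → s ≤ q → 1 / ((n : ℝ) + 1) ≤ h s}

theorem measurableSet_positivePaths (q : ℚ) : MeasurableSet (positivePaths q) := by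
  simp only [positivePaths, ofPred_exists, ofPred_forall]
  exact .iUnion fun n => .iInter fun s => .iInter fun _ => .iInter fun _ =>
    measurableSet_le measurable_const (measurable_pi_apply _)

open scoped Classical in
/-- The first zero of a path that is positive at the origin and continuous on `[0, ∞)`. -/
noncomputable def firstZero (h : ℝ → ℝ) : ℝ≥0∞ :=
  ⨅ q : {q : ℚ // 0 ≤ q}, if h ∈ positivePaths q then ⊤ else ENNReal.ofReal (q : ℚ)

theorem measurable_firstZero : Measurable firstZero :=
  .iInf fun q => .ite (measurableSet_positivePaths q) measurable_const measurable_const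

theorem mem_positivePaths {h : ℝ → ℝ} (hc : ContinuousOn h (Ici 0)) (h0 : 0 < h 0) {q : ℚ}
    (hq : 0 ≤ q) (hne : ∀ t : ℝ, 0 ≤ t → t ≤ q → h t ≠ 0) : h ∈ positivePaths q := by
  have hq' : (0 : ℝ) ≤ q := by exact_mod_cast hq
  have hpos : ∀ t ∈ Icc (0 : ℝ) q, 0 < h t := by
    intro t ht
    by_contra! hle
    obtain ⟨u, hu, hu0⟩ := intermediate_value_Icc' ht.1
      (hc.mono Icc_subset_Ici_self) ⟨hle, h0.le⟩
    exact hne u hu.1 (hu.2.trans ht.2) hu0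
  obtain ⟨t, ht, hmin⟩ := isCompact_Icc.exists_isMinOn (nonempty_Icc.2 hq')
    (hc.mono Icc_subset_Ici_self)
  obtain ⟨n, hn⟩ := exists_nat_one_div_lt (hpos t ht)
  refine ⟨n, fun s hs hsq => hn.le.trans (hmin ⟨?_, ?_⟩)⟩
  · exact_mod_cast hs
  · exact_mod_cast hsq

theorem notMem_positivePaths {h : ℝ → ℝ} (hc : ContinuousOn h (Ici 0)) {q : ℚ} {z : ℝ}
    (hz : 0 ≤ z) (hzq : z < q) (hz0 : h z = 0) : h ∉ positivePaths q := by
  rintro ⟨n, hn⟩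
  have hlt : ∀ᶠ t in 𝓝[Ici 0] z, h t < 1 / ((n : ℝ) + 1) :=
    (hc z hz).eventually (gt_mem_nhds (by rw [hz0]; positivity))
  have hlt' : ∀ᶠ t in 𝓝[>] z, h t < 1 / ((n : ℝ) + 1) :=
    hlt.filter_mono (nhdsWithin_mono _ fun t ht => hz.trans (le_of_lt ht))
  obtain ⟨u, hu, hsub⟩ := mem_nhdsGT_iff_exists_Ioo_subset.1 hlt'
  obtain ⟨s, hs1, hs2⟩ := exists_rat_btwn (lt_min hu hzq)
  have hs0 : (0 : ℝ) ≤ s := hz.trans hs1.le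
  have h1 : h s < 1 / ((n : ℝ) + 1) := hsub ⟨hs1, hs2.trans_le (min_le_left _ _)⟩
  exact absurd (hn s (by exact_mod_cast hs0)
    (by exact_mod_cast (hs2.trans_le (min_le_right _ _)).le)) (not_le.2 h1)

theorem sInf_zeros_mem {h : ℝ → ℝ} (hc : ContinuousOn h (Ici 0))
    (hne : {t | 0 ≤ t ∧ h t = 0}.Nonempty) :
    0 ≤ sInf {t | 0 ≤ t ∧ h t = 0} ∧ h (sInf {t | 0 ≤ t ∧ h t = 0}) = 0 := by
  have hcl : IsClosed {t | 0 ≤ t ∧ h t = 0} :=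
    hc.preimage_isClosed_of_isClosed isClosed_Ici (isClosed_singleton (x := (0 : ℝ)))
  exact hcl.csInf_mem hne ⟨0, fun t ht => ht.1⟩

theorem firstZero_eq_top {h : ℝ → ℝ} (hc : ContinuousOn h (Ici 0)) (h0 : 0 < h 0)
    (hempty : ¬ {t | 0 ≤ t ∧ h t = 0}.Nonempty) : firstZero h = ⊤ := by
  refine iInf_eq_top.2 fun q => if_pos (mem_positivePaths hc h0 q.2 fun t ht _ h => ?_)
  exact hempty ⟨t, ht, h⟩

theorem firstZero_eq_ofReal {h : ℝ → ℝ} (hc : ContinuousOn h (Ici 0)) (h0 : 0 < h 0)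
    (hne : {t | 0 ≤ t ∧ h t = 0}.Nonempty) :
    firstZero h = ENNReal.ofReal (sInf {t | 0 ≤ t ∧ h t = 0}) := by
  have hbdd : BddBelow {t | 0 ≤ t ∧ h t = 0} := ⟨0, fun t ht => ht.1⟩
  obtain ⟨hz, hz0⟩ := sInf_zeros_mem hc hne
  apply le_antisymm
  · refine le_of_forall_gt fun c hc' => ?_
    obtain ⟨q, hq0, hzq, hqc⟩ := ENNReal.lt_iff_exists_rat_btwn.1 hc'
    have hzq' := (ENNReal.ofReal_lt_ofReal_iff_of_nonneg hz).1 hzq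
    refine iInf_lt_iff.2 ⟨⟨q, hq0⟩, ?_⟩
    rw [if_neg (notMem_positivePaths hc hz hzq' hz0)]
    exact hqc
  · refine le_iInf fun q => ?_
    split_ifs with hq
    · exact le_top
    · refine ENNReal.ofReal_le_ofReal (not_lt.1 fun hlt => hq ?_)
      exact mem_positivePaths hc h0 q.2 fun t ht htq hzero =>
        absurd (csInf_le hbdd ⟨ht, hzero⟩) (not_le.2 (htq.trans_lt hlt))

theorem toReal_firstZero {h : ℝ → ℝ} (hc : ContinuousOn h (Ici 0)) (h0 : 0 < h 0) :
    (firstZero h).toReal = sInf {t | 0 ≤ t ∧ h t = 0} := by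
  by_cases hne : {t | 0 ≤ t ∧ h t = 0}.Nonempty
  · rw [firstZero_eq_ofReal hc h0 hne, ENNReal.toReal_ofReal (sInf_zeros_mem hc hne).1]
  · rw [firstZero_eq_top hc h0 hne, not_nonempty_iff_eq_empty.1 hne, Real.sInf_empty,
      ENNReal.toReal_top]

theorem firstZero_ne_top_iff {h : ℝ → ℝ} (hc : ContinuousOn h (Ici 0)) (h0 : 0 < h 0) :
    firstZero h ≠ ⊤ ↔ {t | 0 ≤ t ∧ h t = 0}.Nonempty := by
  refine ⟨fun h => ?_, fun hne => ?_⟩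
  · by_contra hempty
    exact h (firstZero_eq_top hc h0 hempty)
  · rw [firstZero_eq_ofReal hc h0 hne]
    exact ENNReal.ofReal_ne_top

/-- Integrating a bounded function of two independent variables on an event determined by the
first one, the second variable may be averaged first. -/
theorem setIntegral_comp_prodMk_of_indepFun {Ω α β : Type*} [MeasurableSpace Ω]
    [MeasurableSpace α] [MeasurableSpace β] {P : Measure Ω} [IsProbabilityMeasure P]
    {W : Ω → α} {V : Ω → β} (hW : Measurable W) (hV : Measurable V) (hWV : IndepFun W V P)
    {A : Set α} (hA : MeasurableSet A) {F : α × β → ℝ} (hF : Measurable F) {M : ℝ}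
    (hM : ∀ p, ‖F p‖ ≤ M) :
    ∫ ω in W ⁻¹' A, F (W ω, V ω) ∂P = ∫ ω in W ⁻¹' A, ∫ ω', F (W ω, V ω') ∂P ∂P := by
  have hprod := (indepFun_iff_map_prod_eq_prod_map_map hW.aemeasurable hV.aemeasurable).1 hWV
  have := Measure.isProbabilityMeasure_map (μ := P) hW.aemeasurable
  have := Measure.isProbabilityMeasure_map (μ := P) hV.aemeasurable
  have hinner : ∀ w, ∫ v, F (w, v) ∂(P.map V) = ∫ ω', F (w, V ω') ∂P := fun w =>
    integral_map hV.aemeasurable (hF.comp measurable_prodMk_left).aestronglyMeasurable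
  calc ∫ ω in W ⁻¹' A, F (W ω, V ω) ∂P
      = ∫ p in A ×ˢ univ, F p ∂(P.map fun ω => (W ω, V ω)) := by
        rw [setIntegral_map (hA.prod .univ) hF.aestronglyMeasurable (hW.prodMk hV).aemeasurable]
        congr 2
        ext ω
        simp
    _ = ∫ w in A, ∫ v, F (w, v) ∂(P.map V) ∂(P.map W) := by
        rw [hprod, setIntegral_prod, Measure.restrict_univ]
        exact (Integrable.of_bound hF.aestronglyMeasurable M (ae_of_all _ hM)).integrableOn
    _ = _ := by
        simp_rw [hinner]
        refine setIntegral_map hA ?_ hW.aemeasurable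
        simp_rw [← hinner]
        exact hF.stronglyMeasurable.integral_prod_right'.aestronglyMeasurable

/-- The deterministic time change turning Brownian motion into an unstable Ornstein-Uhlenbeck
noise. -/
noncomputable def timeChange (lam t : ℝ) : ℝ := (1 - Real.exp (-(2 * lam * t))) / (2 * lam)

theorem continuous_timeChange (lam : ℝ) : Continuous (timeChange lam) := by
  unfold timeChange
  fun_prop

theorem timeChange_zero (lam : ℝ) : timeChange lam 0 = 0 := by simp [timeChange]

theorem strictMono_timeChange {lam : ℝ} (hlam : 0 < lam) : StrictMono (timeChange lam) := by
  intro s t hst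
  unfold timeChange
  gcongr

theorem timeChange_nonneg {lam t : ℝ} (hlam : 0 < lam) (ht : 0 ≤ t) : 0 ≤ timeChange lam t := by
  rw [← timeChange_zero lam]
  exact (strictMono_timeChange hlam).monotone ht

theorem timeChange_pos {lam t : ℝ} (hlam : 0 < lam) (ht : 0 < t) : 0 < timeChange lam t := by
  rw [← timeChange_zero lam]
  exact strictMono_timeChange hlam ht

/-- The unstable coordinate driven by the noise path `b`. -/
noncomputable def unstablePath (lam x₁ ε : ℝ) (b : ℝ → ℝ) (t : ℝ) : ℝ :=
  Real.exp (lam * t) * (x₁ + ε * b (timeChange lam t))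

/-- The set of times at which the unstable coordinate is at one of the two exit points. -/
def exitTimes (lam x₁ qm qp ε : ℝ) (b : ℝ → ℝ) : Set ℝ :=
  {t | 0 ≤ t ∧ (unstablePath lam x₁ ε b t = qm ∨ unstablePath lam x₁ ε b t = qp)}

/-- The gap function, vanishing exactly when the unstable coordinate is at an exit point. -/
noncomputable def exitGap (lam x₁ qm qp ε : ℝ) (b : ℝ → ℝ) (t : ℝ) : ℝ :=
  (unstablePath lam x₁ ε b t - qm) * (qp - unstablePath lam x₁ ε b t)

/-- A version of the exit time of the unstable coordinate which is measurable in the noise path. -/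
noncomputable def exitTime (lam x₁ qm qp ε : ℝ) (b : ℝ → ℝ) : ℝ :=
  (firstZero (exitGap lam x₁ qm qp ε b)).toReal

/-- A measurable version of the set of noise paths for which the exit occurs at `qp`. -/
def exitRight (lam x₁ qm qp ε : ℝ) : Set (ℝ → ℝ) :=
  {b | firstZero (exitGap lam x₁ qm qp ε b) ≠ ⊤ ∧
    Real.exp (lam * exitTime lam x₁ qm qp ε b) *
      (x₁ + ε * pathEval (timeChange lam (exitTime lam x₁ qm qp ε b)) b) = qp}

section Exit

variable {lam x₁ qm qp ε : ℝ} {b : ℝ → ℝ}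

theorem exitTime_nonneg : 0 ≤ exitTime lam x₁ qm qp ε b := ENNReal.toReal_nonneg

theorem measurable_exitGap (lam x₁ qm qp ε : ℝ) : Measurable (exitGap lam x₁ qm qp ε) := by
  refine measurable_pi_lambda _ fun t => ?_
  have : Measurable fun b : ℝ → ℝ => b (timeChange lam t) := measurable_pi_apply _
  unfold exitGap unstablePath
  fun_prop

theorem measurable_exitTime (lam x₁ qm qp ε : ℝ) : Measurable (exitTime lam x₁ qm qp ε) :=
  (measurable_firstZero.comp (measurable_exitGap lam x₁ qm qp ε)).ennreal_toReal

theorem measurableSet_exitRight (lam x₁ qm qp ε : ℝ) :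
    MeasurableSet (exitRight lam x₁ qm qp ε) := by
  have hT := measurable_exitTime lam x₁ qm qp ε
  have hS : Measurable fun b => timeChange lam (exitTime lam x₁ qm qp ε b) :=
    (continuous_timeChange lam).measurable.comp hT
  have hE : Measurable fun b => pathEval (timeChange lam (exitTime lam x₁ qm qp ε b)) b :=
    measurable_pathEval_comp hS measurable_id'
  have h₁ : MeasurableSet {b | firstZero (exitGap lam x₁ qm qp ε b) ≠ ⊤} :=
    (measurableSet_eq_fun (measurable_firstZero.comp (measurable_exitGap lam x₁ qm qp ε))
      measurable_const).compl
  have h₂ : MeasurableSet {b | Real.exp (lam * exitTime lam x₁ qm qp ε b) *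
      (x₁ + ε * pathEval (timeChange lam (exitTime lam x₁ qm qp ε b)) b) = qp} :=
    measurableSet_eq_fun
      ((hT.const_mul lam).exp.mul (measurable_const.add (hE.const_mul ε))) measurable_const
  exact h₁.inter h₂

theorem exitTimes_eq : exitTimes lam x₁ qm qp ε b =
    {t | 0 ≤ t ∧ exitGap lam x₁ qm qp ε b t = 0} := by
  ext t
  simp only [exitTimes, exitGap, mem_ofPred_eq, mul_eq_zero, sub_eq_zero, eq_comm (a := qp)]

theorem continuousOn_unstablePath (hlam : 0 < lam) (hb : ContinuousOn b (Ici 0)) :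
    ContinuousOn (unstablePath lam x₁ ε b) (Ici 0) := by
  have h : ContinuousOn (fun t => b (timeChange lam t)) (Ici 0) :=
    hb.comp (continuous_timeChange lam).continuousOn fun t ht => timeChange_nonneg hlam ht
  exact (by fun_prop : ContinuousOn (fun t => Real.exp (lam * t)) (Ici 0)).mul
    (continuousOn_const.add (continuousOn_const.mul h))

theorem continuousOn_exitGap (hlam : 0 < lam) (hb : ContinuousOn b (Ici 0)) :
    ContinuousOn (exitGap lam x₁ qm qp ε b) (Ici 0) := by
  have h := continuousOn_unstablePath (x₁ := x₁) (ε := ε) hlam hb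
  unfold exitGap
  fun_prop

theorem unstablePath_zero (hb0 : b 0 = 0) : unstablePath lam x₁ ε b 0 = x₁ := by
  simp [unstablePath, timeChange_zero, hb0]

theorem exitGap_zero_pos (hqm : qm < x₁) (hqp : x₁ < qp) (hb0 : b 0 = 0) :
    0 < exitGap lam x₁ qm qp ε b 0 := by
  rw [exitGap, unstablePath_zero hb0]
  exact mul_pos (sub_pos.2 hqm) (sub_pos.2 hqp)

theorem exitTime_eq_sInf (hlam : 0 < lam) (hqm : qm < x₁) (hqp : x₁ < qp)
    (hb : ContinuousOn b (Ici 0)) (hb0 : b 0 = 0) :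
    exitTime lam x₁ qm qp ε b = sInf (exitTimes lam x₁ qm qp ε b) := by
  rw [exitTimes_eq, exitTime, toReal_firstZero (continuousOn_exitGap hlam hb)
    (exitGap_zero_pos hqm hqp hb0)]

theorem mem_exitRight_iff (hlam : 0 < lam) (hqm : qm < x₁) (hqp : x₁ < qp)
    (hb : ContinuousOn b (Ici 0)) (hb0 : b 0 = 0) :
    b ∈ exitRight lam x₁ qm qp ε ↔ (exitTimes lam x₁ qm qp ε b).Nonempty ∧
      unstablePath lam x₁ ε b (exitTime lam x₁ qm qp ε b) = qp := by
  rw [exitRight, mem_ofPred_eq, firstZero_ne_top_iff (continuousOn_exitGap hlam hb)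
    (exitGap_zero_pos hqm hqp hb0), exitTimes_eq,
    pathEval_eq hb (timeChange_nonneg hlam exitTime_nonneg), unstablePath]

/-- A path which ends high enough and stays above its chord up to a small error leads to an exit
at `qp`. -/
theorem mem_exitRight_of_bridge (hlam : 0 < lam) (hqm : qm < x₁) (hx₁ : x₁ < 0) (hqp : 0 < qp)
    (hε : 0 < ε) (hb : ContinuousOn b (Ici 0)) (hb0 : b 0 = 0) {t' K : ℝ} (ht' : 0 < t')
    (hK : ε * K < (x₁ - qm) * Real.exp (-(lam * t')))
    (hend : (qp * Real.exp (-(lam * t')) - x₁) / ε ≤ b (timeChange lam t'))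
    (hbridge : ∀ s, 0 ≤ s → s ≤ timeChange lam t' →
      -K ≤ b s - s / timeChange lam t' * b (timeChange lam t')) :
    b ∈ exitRight lam x₁ qm qp ε := by
  have hxq : x₁ < qp := hx₁.trans hqp
  have hS := timeChange_pos hlam ht'
  rw [div_le_iff₀ hε] at hend
  have hlow : ∀ t, 0 ≤ t → t ≤ t' → qm < unstablePath lam x₁ ε b t := by
    intro t ht htt
    have hs := timeChange_nonneg hlam ht
    have hss := (strictMono_timeChange hlam).monotone htt
    have hbr := hbridge _ hs hss
    have hr0 : 0 ≤ timeChange lam t / timeChange lam t' := by positivity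
    have hend' : -x₁ ≤ ε * b (timeChange lam t') := by
      have : 0 < qp * Real.exp (-(lam * t')) := by positivity
      linarith
    have h1 : timeChange lam t / timeChange lam t' * -x₁ ≤
        timeChange lam t / timeChange lam t' * (ε * b (timeChange lam t')) := by gcongr
    have hratio : 1 - timeChange lam t / timeChange lam t' ≤ Real.exp (-(lam * t)) := by
      have h2 : timeChange lam t' * (2 * lam) ≤ 1 := by
        rw [timeChange, div_mul_cancel₀ _ (by positivity)]
        linarith [Real.exp_pos (-(2 * lam * t'))]
      have h3 : timeChange lam t * (2 * lam) ≤ timeChange lam t / timeChange lam t' := by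
        rw [le_div_iff₀ hS]
        calc timeChange lam t * (2 * lam) * timeChange lam t'
            = timeChange lam t * (timeChange lam t' * (2 * lam)) := by ring
          _ ≤ timeChange lam t * 1 := by gcongr
          _ = _ := mul_one _
      have h4 : timeChange lam t * (2 * lam) = 1 - Real.exp (-(2 * lam * t)) := by
        rw [timeChange, div_mul_cancel₀ _ (by positivity)]
      have h5 : Real.exp (-(2 * lam * t)) ≤ Real.exp (-(lam * t)) := by
        refine Real.exp_le_exp.2 ?_
        nlinarith
      linarith
    have h6 : (x₁ - qm) * Real.exp (-(lam * t')) ≤ (x₁ - qm) * Real.exp (-(lam * t)) := by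
      have : 0 < x₁ - qm := sub_pos.2 hqm
      gcongr
    have h7 : qm * Real.exp (-(lam * t)) < x₁ + ε * b (timeChange lam t) := by
      have h8 := mul_le_mul_of_nonneg_left hbr hε.le
      have h9 := mul_le_mul_of_nonneg_left hratio (neg_pos.2 hx₁).le
      nlinarith
    calc qm = Real.exp (lam * t) * (qm * Real.exp (-(lam * t))) := by
          rw [Real.exp_neg]
          field_simp
      _ < _ := by
          unfold unstablePath
          gcongr
  have hhigh : qp ≤ unstablePath lam x₁ ε b t' := by
    calc qp = Real.exp (lam * t') * (qp * Real.exp (-(lam * t'))) := by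
          rw [Real.exp_neg]
          field_simp
      _ ≤ _ := by
          unfold unstablePath
          gcongr
          linarith
  obtain ⟨t, ht, htq⟩ := intermediate_value_Icc ht'.le
    ((continuousOn_unstablePath (x₁ := x₁) (ε := ε) hlam hb).mono Icc_subset_Ici_self)
    ⟨(unstablePath_zero (lam := lam) (x₁ := x₁) (ε := ε) hb0).trans_le hxq.le, hhigh⟩
  have hmem : t ∈ exitTimes lam x₁ qm qp ε b := ⟨ht.1, Or.inr htq⟩
  rw [mem_exitRight_iff hlam hqm hxq hb hb0]
  refine ⟨⟨t, hmem⟩, ?_⟩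
  rw [exitTime_eq_sInf hlam hqm hxq hb hb0]
  have hinf : sInf (exitTimes lam x₁ qm qp ε b) ∈ exitTimes lam x₁ qm qp ε b := by
    have hne : (exitTimes lam x₁ qm qp ε b).Nonempty := ⟨t, hmem⟩
    rw [exitTimes_eq] at hne ⊢
    exact sInf_zeros_mem (continuousOn_exitGap hlam hb) hne
  have hle : sInf (exitTimes lam x₁ qm qp ε b) ≤ t := csInf_le ⟨0, fun s hs => hs.1⟩ hmem
  exact hinf.2.resolve_left (hlow _ hinf.1 (hle.trans ht.2)).ne'

/-- An early exit at `qp` forces the noise path to be large early. -/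
theorem exists_lt_of_mem_exitRight (hlam : 0 < lam) (hqm : qm < x₁) (hx₁ : x₁ < 0) (hqp : 0 < qp)
    (hε : 0 < ε) (hb : ContinuousOn b (Ici 0)) (hb0 : b 0 = 0) {T t' : ℝ} (hT : T < t')
    (hmem : b ∈ exitRight lam x₁ qm qp ε) (hle : exitTime lam x₁ qm qp ε b ≤ T) :
    ∃ s, 0 ≤ s ∧ s ≤ timeChange lam T ∧ (qp * Real.exp (-(lam * t')) - x₁) / ε < b s := by
  have h := ((mem_exitRight_iff hlam hqm (hx₁.trans hqp) hb hb0).1 hmem).2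
  set θ := exitTime lam x₁ qm qp ε b
  refine ⟨timeChange lam θ, timeChange_nonneg hlam exitTime_nonneg,
    (strictMono_timeChange hlam).monotone hle, ?_⟩
  have h1 : x₁ + ε * b (timeChange lam θ) = qp * Real.exp (-(lam * θ)) := by
    rw [← h, unstablePath, Real.exp_neg]
    field_simp
  have h2 : qp * Real.exp (-(lam * t')) < qp * Real.exp (-(lam * θ)) := by
    gcongr
    exact hle.trans_lt hT
  rw [div_lt_iff₀ hε]
  linarith

end Exit

/-- The average of `f` with respect to the centred Gaussian law with standard deviation `c`. -/
noncomputable def gaussAvg (f : ℝ →ᵇ ℝ) (c : ℝ) : ℝ := ∫ z, f (c * z) ∂gaussianReal 0 1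

theorem continuous_gaussAvg (f : ℝ →ᵇ ℝ) : Continuous (gaussAvg f) :=
  continuous_of_dominated (bound := fun _ => ‖f‖)
    (fun c => (by fun_prop : Continuous fun z => f (c * z)).aestronglyMeasurable)
    (fun c => ae_of_all _ fun z => f.norm_coe_le_norm _)
    (integrable_const _) (ae_of_all _ fun z => by fun_prop)

theorem norm_gaussAvg_le (f : ℝ →ᵇ ℝ) (c : ℝ) : ‖gaussAvg f c‖ ≤ ‖f‖ := by
  simpa [gaussAvg] using norm_integral_le_of_norm_le_const (μ := gaussianReal 0 1)
    (ae_of_all _ fun z => f.norm_coe_le_norm (c * z))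

theorem tendsto_timeChange_atTop {mu : ℝ} (hmu : 0 < mu) :
    Tendsto (timeChange mu) atTop (𝓝 (1 / (2 * mu))) := by
  have h : Tendsto (fun t => Real.exp (-(2 * mu * t))) atTop (𝓝 0) :=
    Real.tendsto_exp_neg_atTop_nhds_zero.comp (tendsto_id.const_mul_atTop (by positivity))
  have h' := (h.const_sub 1).div_const (2 * mu)
  rwa [sub_zero] at h'

theorem IsBrownianMotion.map_eq_s16 {Ω : Type*} [MeasurableSpace Ω] {P : Measure Ω}
    {B : ℝ → Ω → ℝ} (hB : IsBrownianMotion P B) {r : ℝ} (hr : 0 ≤ r) :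
    P.map (B r) = gaussianReal 0 r.toNNReal := by
  have h := hB.2.2.1 0 r le_rfl hr
  rw [sub_zero] at h
  rw [← h]
  refine Measure.map_congr ?_
  filter_upwards [hB.2.1] with ω hω
  simp [hω.1]

/-- The noise contribution to the stable coordinate at a deterministic time is Gaussian. -/
theorem IsBrownianMotion.integral_stable_noise {Ω : Type*} [MeasurableSpace Ω] {P : Measure Ω}
    {B : ℝ → Ω → ℝ} (hB : IsBrownianMotion P B) {mu t : ℝ} (hmu : 0 < mu) (ht : 0 ≤ t)
    (f : ℝ →ᵇ ℝ) :
    ∫ ω, f (Real.exp (-(mu * t)) *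
        pathEval ((Real.exp (2 * mu * t) - 1) / (2 * mu)) fun s => B s ω) ∂P =
      gaussAvg f √(timeChange mu t) := by
  set r := (Real.exp (2 * mu * t) - 1) / (2 * mu) with hr_def
  have hr : 0 ≤ r := by
    have : 1 ≤ Real.exp (2 * mu * t) := Real.one_le_exp (by positivity)
    exact div_nonneg (by linarith) (by positivity)
  have hscale : Real.exp (-(mu * t)) * √r = √(timeChange mu t) := by
    rw [← Real.sqrt_sq (Real.exp_pos (-(mu * t))).le, ← Real.sqrt_mul (sq_nonneg _), timeChange,
      hr_def, ← mul_div_assoc, mul_sub, ← Real.exp_nat_mul, ← Real.exp_add]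
    congr 3
    · ring_nf
      simp
    · push_cast
      ring_nf
  have hstd : gaussianReal 0 r.toNNReal = (gaussianReal 0 1).map (√r * ·) := by
    rw [gaussianReal_map_const_mul]
    congr 1
    · simp
    · ext
      simp [hr]
  have hcont : ∀ c : ℝ, Continuous fun x => f (c * x) := fun c => by fun_prop
  calc _ = ∫ ω, f (Real.exp (-(mu * t)) * B r ω) ∂P := by
        refine integral_congr_ae ?_
        filter_upwards [hB.2.1] with ω hω
        rw [pathEval_eq hω.2 hr]
    _ = ∫ x, f (Real.exp (-(mu * t)) * x) ∂(P.map (B r)) :=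
        (integral_map (hB.1 r).aemeasurable (hcont _).aestronglyMeasurable).symm
    _ = ∫ z, f (Real.exp (-(mu * t)) * (√r * z)) ∂gaussianReal 0 1 := by
        rw [hB.map_eq_s16 hr, hstd]
        exact integral_map (by fun_prop) (hcont _).aestronglyMeasurable
    _ = _ := by simp only [gaussAvg, ← mul_assoc, hscale]

/-- If the random times `τ i` escape to infinity in probability, then the averages of `G (τ i)`
converge to the limit of `G` at infinity. -/
theorem tendsto_integral_comp_of_tendsto_measure_le {ι Ω : Type*} [MeasurableSpace Ω]
    {l : Filter ι} {Q : ι → Measure Ω} (hQ : ∀ᶠ i in l, IsProbabilityMeasure (Q i))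
    {τ : ι → Ω → ℝ} (hτ : ∀ i, Measurable (τ i)) {G : ℝ → ℝ} (hG : Measurable G) {M L : ℝ}
    (hM : ∀ t, ‖G t‖ ≤ M) (hL : Tendsto G atTop (𝓝 L))
    (hT : ∀ T > 0, Tendsto (fun i => (Q i).real {ω | τ i ω ≤ T}) l (𝓝 0)) :
    Tendsto (fun i => ∫ ω, G (τ i ω) ∂Q i) l (𝓝 L) := by
  rw [Metric.tendsto_nhds]
  intro δ hδ
  obtain ⟨T, hTδ⟩ := eventually_atTop.1 (Metric.tendsto_nhds.1 hL (δ / 2) (half_pos hδ))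
  have hsmall : ∀ᶠ i in l, (M + ‖L‖) * (Q i).real {ω | τ i ω ≤ max T 1} < δ / 2 := by
    have h := (hT (max T 1) (by positivity)).const_mul (M + ‖L‖)
    rw [mul_zero] at h
    exact h.eventually (gt_mem_nhds (half_pos hδ))
  filter_upwards [hQ, hsmall] with i hi hsmall
  have hset : MeasurableSet {ω | τ i ω ≤ max T 1} := measurableSet_le (hτ i) measurable_const
  have hint : Integrable (fun ω => G (τ i ω)) (Q i) :=
    Integrable.of_bound (hG.comp (hτ i)).aestronglyMeasurable M (ae_of_all _ fun ω => hM _)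
  have hbound : Integrable (fun ω => δ / 2 +
      {ω | τ i ω ≤ max T 1}.indicator (fun _ => M + ‖L‖) ω) (Q i) :=
    (integrable_const _).add ((integrable_const _).indicator hset)
  rw [dist_eq_norm]
  calc ‖∫ ω, G (τ i ω) ∂Q i - L‖ = ‖∫ ω, (G (τ i ω) - L) ∂Q i‖ := by
        rw [integral_sub hint (integrable_const _)]
        simp
    _ ≤ ∫ ω, (δ / 2 + {ω | τ i ω ≤ max T 1}.indicator (fun _ => M + ‖L‖) ω) ∂Q i := by
        refine norm_integral_le_of_norm_le hbound (ae_of_all _ fun ω => ?_)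
        by_cases hω : τ i ω ≤ max T 1
        · rw [indicator_of_mem (by exact hω)]
          linarith [norm_sub_le (G (τ i ω)) L, hM (τ i ω)]
        · rw [indicator_of_notMem (by exact hω), add_zero, ← dist_eq_norm]
          exact (hTδ _ ((le_max_left T 1).trans (not_le.1 hω).le)).le
    _ = δ / 2 + (M + ‖L‖) * (Q i).real {ω | τ i ω ≤ max T 1} := by
        rw [integral_add (integrable_const _) ((integrable_const _).indicator hset),
          integral_indicator_const _ hset]
        simp [mul_comm]
    _ < δ := by linarith

section ExitProbability

variable {Ω : Type*} [MeasurableSpace Ω] {P : Measure Ω} {B : ℝ → Ω → ℝ} {lam x₁ qm qp : ℝ}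

theorem IsBrownianMotion.measure_le_eq (hB : IsBrownianMotion P B) {r : ℝ} (hr : 0 ≤ r) (x : ℝ) :
    P {ω | x ≤ B r ω} = gaussianReal 0 r.toNNReal (Ici x) := by
  rw [← hB.map_eq_s16 hr, Measure.map_apply (hB.1 r) measurableSet_Ici]
  rfl

/-- The probability of an early exit at `qp` is bounded by a Gaussian tail. -/
theorem IsBrownianMotion.measure_exitRight_inter_le (hB : IsBrownianMotion P B) (hlam : 0 < lam)
    (hqm : qm < x₁) (hx₁ : x₁ < 0) (hqp : 0 < qp) {ε T t' : ℝ} (hε : 0 < ε) (hT : 0 ≤ T)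
    (hTt' : T < t') :
    P ((fun ω t => B t ω) ⁻¹' exitRight lam x₁ qm qp ε ∩
        {ω | exitTime lam x₁ qm qp ε (fun t => B t ω) ≤ T}) ≤
      2 * gaussianReal 0 (timeChange lam T).toNNReal
        (Ici ((qp * Real.exp (-(lam * t')) - x₁) / ε)) := by
  have hS := timeChange_nonneg hlam hT
  have h := hB.isBrownianReal.measure_exists_lt_le (fun t => hB.1 t) (timeChange lam T).toNNReal
    ((qp * Real.exp (-(lam * t')) - x₁) / ε)
  rw [Real.coe_toNNReal _ hS, hB.measure_le_eq hS] at h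
  refine (measure_mono_ae ?_).trans h
  filter_upwards [hB.2.1] with ω hω hmem
  obtain ⟨s, hs, hsT, hlt⟩ := exists_lt_of_mem_exitRight hlam hqm hx₁ hqp hε hω.2 hω.1 hTt'
    hmem.1 hmem.2
  exact ⟨⟨s, hs⟩, NNReal.coe_le_coe.1 (by rwa [Real.coe_toNNReal _ hS]), hlt⟩

/-- The probability of an exit at `qp` is bounded below by a Gaussian tail for small noise. -/
theorem IsBrownianMotion.eventually_le_measure_exitRight (hB : IsBrownianMotion P B)
    (hlam : 0 < lam) (hqm : qm < x₁) (hx₁ : x₁ < 0) (hqp : 0 < qp) {t' : ℝ} (ht' : 0 < t') :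
    ∀ᶠ ε in 𝓝[>] (0 : ℝ), gaussianReal 0 (timeChange lam t').toNNReal
        (Ici ((qp * Real.exp (-(lam * t')) - x₁) / ε)) ≤
      2 * P ((fun ω t => B t ω) ⁻¹' exitRight lam x₁ qm qp ε) := by
  have hS := timeChange_pos hlam ht'
  obtain ⟨K, hK⟩ := hB.isBrownianReal.exists_measure_le_two_mul_bridge
    (S := (timeChange lam t').toNNReal) (Real.toNNReal_pos.2 hS).ne'
  have hsmall : ∀ᶠ ε in 𝓝[>] (0 : ℝ), ε * K < (x₁ - qm) * Real.exp (-(lam * t')) := by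
    have h : Tendsto (fun ε : ℝ => ε * K) (𝓝 0) (𝓝 0) :=
      Continuous.tendsto' (by fun_prop) _ _ (zero_mul K)
    exact (h.mono_left nhdsWithin_le_nhds).eventually
      (gt_mem_nhds (mul_pos (sub_pos.2 hqm) (Real.exp_pos _)))
  filter_upwards [hsmall, self_mem_nhdsWithin] with ε hεK hε
  have h := hK ((qp * Real.exp (-(lam * t')) - x₁) / ε)
  rw [Real.coe_toNNReal _ hS.le, hB.measure_le_eq hS.le] at h
  refine h.trans ?_
  gcongr 2 * ?_
  refine measure_mono_ae ?_
  filter_upwards [hB.2.1] with ω hω hmem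
  refine mem_exitRight_of_bridge hlam hqm hx₁ hqp hε hω.2 hω.1 ht' hεK hmem.1 fun s hs hst => ?_
  exact hmem.2 ⟨s, hs⟩ (NNReal.coe_le_coe.1 (by rwa [Real.coe_toNNReal _ hS.le]))

theorem gaussianReal_Ici_pos {w : ℝ≥0} (hw : w ≠ 0) (x : ℝ) : 0 < gaussianReal 0 w (Ici x) := by
  refine pos_iff_ne_zero.2 fun h => ?_
  have := gaussianReal_absolutelyContinuous' 0 hw h
  simp at this

theorem IsBrownianMotion.eventually_measure_exitRight_ne_zero (hB : IsBrownianMotion P B)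
    (hlam : 0 < lam) (hqm : qm < x₁) (hx₁ : x₁ < 0) (hqp : 0 < qp) :
    ∀ᶠ ε in 𝓝[>] (0 : ℝ), P ((fun ω t => B t ω) ⁻¹' exitRight lam x₁ qm qp ε) ≠ 0 := by
  filter_upwards [hB.eventually_le_measure_exitRight hlam hqm hx₁ hqp one_pos] with ε h h0
  rw [h0, mul_zero] at h
  exact (gaussianReal_Ici_pos (Real.toNNReal_pos.2 (timeChange_pos hlam one_pos)).ne' _).not_ge h

/-- Conditionally on an exit at `qp`, the exit time escapes to infinity in probability. -/
theorem IsBrownianMotion.tendsto_cond_exitTime_le [IsProbabilityMeasure P]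
    (hB : IsBrownianMotion P B) (hlam : 0 < lam) (hqm : qm < x₁) (hx₁ : x₁ < 0) (hqp : 0 < qp)
    {T : ℝ} (hT : 0 < T) :
    Tendsto (fun ε => (P[|(fun ω t => B t ω) ⁻¹' exitRight lam x₁ qm qp ε]).real
      {ω | exitTime lam x₁ qm qp ε (fun t => B t ω) ≤ T}) (𝓝[>] 0) (𝓝 0) := by
  have hW : Measurable fun ω t => B t ω := measurable_pi_lambda _ hB.1
  have ha : 0 < qp * Real.exp (-(lam * (T + 1))) - x₁ := by
    have : 0 < qp * Real.exp (-(lam * (T + 1))) := by positivity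
    linarith
  have hS := timeChange_pos hlam hT
  have hSS := strictMono_timeChange hlam (lt_add_one T)
  have hlim := ((tendsto_gaussianReal_Ici_div_atTop (Real.toNNReal_pos.2 hS).ne'
    ((Real.toNNReal_lt_toNNReal_iff (hS.trans hSS)).2 hSS)).comp
    (tendsto_inv_nhdsGT_zero.const_mul_atTop ha)).const_mul 4
  rw [mul_zero] at hlim
  refine squeeze_zero' (Eventually.of_forall fun ε => measureReal_nonneg) ?_ hlim
  filter_upwards [hB.eventually_le_measure_exitRight hlam hqm hx₁ hqp (hT.trans (lt_add_one T)),
    hB.eventually_measure_exitRight_ne_zero hlam hqm hx₁ hqp, self_mem_nhdsWithin]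
    with ε hlow hne hε
  have hup := hB.measure_exitRight_inter_le hlam hqm hx₁ hqp hε hT.le (lt_add_one T)
  have hpos := gaussianReal_Ici_pos (Real.toNNReal_pos.2 (hS.trans hSS)).ne'
    ((qp * Real.exp (-(lam * (T + 1))) - x₁) / ε)
  simp only [Function.comp_apply, ← div_eq_mul_inv]
  set A := (fun ω t => B t ω) ⁻¹' exitRight lam x₁ qm qp ε
  have hA : MeasurableSet A := hW (measurableSet_exitRight ..)
  set v := (timeChange lam T).toNNReal
  set w := (timeChange lam (T + 1)).toNNReal
  set I := Ici ((qp * Real.exp (-(lam * (T + 1))) - x₁) / ε)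
  have hup' := ENNReal.toReal_mono (by finiteness) hup
  have hlow' := ENNReal.toReal_mono (by finiteness) hlow
  simp only [ENNReal.toReal_mul, ENNReal.toReal_ofNat] at hup' hlow'
  have hpos' : 0 < (gaussianReal 0 w I).toReal := ENNReal.toReal_pos hpos.ne' (by finiteness)
  rw [measureReal_def, cond_apply hA, ENNReal.toReal_mul, ENNReal.toReal_inv, measureReal_def,
    measureReal_def, ← div_eq_inv_mul, mul_div_assoc', div_le_div_iff₀ (by linarith) hpos']
  calc _ ≤ (2 * (gaussianReal 0 v I).toReal) * (2 * (P A).toReal) := by gcongr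
    _ = _ := by ring

end ExitProbability

/-- With `J_ε = ε e^{-μ τ_ε} B²((e^{2μ τ_ε} - 1)/(2μ))` (the noise contribution to
`X²_ε(τ_ε)`), the conditional law `Law[J_ε/ε | C_ε]` converges weakly, as `ε → 0⁺`, to the
law of `N/√(2μ)` with `N` standard Gaussian. -/
theorem noise_contribution_scaling_limit
    {Ω : Type*} [MeasurableSpace Ω] (P : Measure Ω) [IsProbabilityMeasure P]
    (hPc : P.IsComplete)
    (B1 B2 : ℝ → Ω → ℝ) (hB1 : IsBrownianMotion P B1) (hB2 : IsBrownianMotion P B2)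
    (hB12 : IndepFun (fun ω => fun t : ℝ => B1 t ω) (fun ω => fun t : ℝ => B2 t ω) P)
    (lam mu al x₁ qm qp : ℝ) (hlam : 0 < lam) (hmu : 0 < mu)
    (hqm : qm < x₁) (hx₁ : x₁ < 0) (hqp : 0 < qp)
    (ξ : ℝ → Ω → ℝ) (hξmeas : ∀ ε, Measurable (ξ ε))
    (hξindep : ∀ ε, IndepFun (ξ ε) (fun ω => fun t : ℝ => (B1 t ω, B2 t ω)) P)
    (ν : Measure ℝ) [IsProbabilityMeasure ν] (hν0 : ν {0} < 1)
    (hξconv : ∀ g : BoundedContinuousFunction ℝ ℝ,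
      Tendsto (fun ε : ℝ => ∫ ω, g (ξ ε ω) ∂P) (𝓝[>] 0) (𝓝 (∫ x, g x ∂ν)))
    (X1 : ℝ → ℝ → Ω → ℝ)
    (hX1 : ∀ ε t ω, X1 ε t ω
      = Real.exp (lam * t) * (x₁ + ε * B1 ((1 - Real.exp (-(2 * lam * t))) / (2 * lam)) ω))
    (τ : ℝ → Ω → ℝ)
    (hτ : ∀ ε ω, τ ε ω = sInf {t | 0 ≤ t ∧ (X1 ε t ω = qm ∨ X1 ε t ω = qp)})
    (C : ℝ → Set Ω)
    (hC : ∀ ε, C ε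
      = {ω | {t | 0 ≤ t ∧ (X1 ε t ω = qm ∨ X1 ε t ω = qp)}.Nonempty ∧ X1 ε (τ ε ω) ω = qp})
    (J : ℝ → Ω → ℝ)
    (hJ : ∀ ε ω, J ε ω = ε * Real.exp (-(mu * τ ε ω))
      * B2 ((Real.exp (2 * mu * τ ε ω) - 1) / (2 * mu)) ω)
    -- `N` is a standard Gaussian random variable on an auxiliary probability space
    {Ω' : Type*} [MeasurableSpace Ω'] (P' : Measure Ω') [IsProbabilityMeasure P']
    (N : Ω' → ℝ) (hN : Measure.map N P' = gaussianReal 0 1) :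
    ∀ f : BoundedContinuousFunction ℝ ℝ,
      Tendsto
        (fun ε : ℝ => ∫ ω, f (J ε ω / ε) ∂(P[|C ε]))
        (𝓝[>] 0)
        (𝓝 (∫ ω', f (N ω' / Real.sqrt (2 * mu)) ∂P')) := by
  intro f
  let W : Ω → ℝ → ℝ := fun ω t => B1 t ω
  let V : Ω → ℝ → ℝ := fun ω t => B2 t ω
  have hW : Measurable W := measurable_pi_lambda _ hB1.1
  have hV : Measurable V := measurable_pi_lambda _ hB2.1
  let A : ℝ → Set Ω := fun ε => W ⁻¹' exitRight lam x₁ qm qp ε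
  have hA : ∀ ε, MeasurableSet (A ε) := fun ε => hW (measurableSet_exitRight ..)
  have hset : ∀ ε ω, {t | 0 ≤ t ∧ (X1 ε t ω = qm ∨ X1 ε t ω = qp)} =
      exitTimes lam x₁ qm qp ε (W ω) := fun ε ω => by
    simp only [hX1]
    rfl
  have hτW : ∀ ε, ∀ᵐ ω ∂P, τ ε ω = exitTime lam x₁ qm qp ε (W ω) := fun ε => by
    filter_upwards [hB1.2.1] with ω hω
    rw [hτ, hset, exitTime_eq_sInf hlam hqm (hx₁.trans hqp) hω.2 hω.1]
  have hCA : ∀ ε, C ε =ᵐ[P] A ε := fun ε => by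
    filter_upwards [hB1.2.1, hτW ε] with ω hω hτω
    refine propext ?_
    change ω ∈ C ε ↔ W ω ∈ exitRight lam x₁ qm qp ε
    rw [hC, mem_ofPred_eq, hset, mem_exitRight_iff hlam hqm (hx₁.trans hqp) hω.2 hω.1, hX1, hτω]
    rfl
  have hcond : ∀ ε, P[|C ε] = P[|A ε] := fun ε => by
    rw [ProbabilityTheory.cond, ProbabilityTheory.cond, measure_congr (hCA ε),
      Measure.restrict_congr_set (hCA ε)]
  have hkey : ∀ ε, 0 < ε → ∫ ω, f (J ε ω / ε) ∂P[|C ε] =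
      ∫ ω, gaussAvg f √(timeChange mu (exitTime lam x₁ qm qp ε (W ω))) ∂P[|A ε] := by
    intro ε hε
    let F : (ℝ → ℝ) × (ℝ → ℝ) → ℝ := fun p =>
      f (Real.exp (-(mu * exitTime lam x₁ qm qp ε p.1)) *
        pathEval ((Real.exp (2 * mu * exitTime lam x₁ qm qp ε p.1) - 1) / (2 * mu)) p.2)
    have hF : Measurable F := by
      have hT : Measurable fun p : (ℝ → ℝ) × (ℝ → ℝ) => exitTime lam x₁ qm qp ε p.1 :=
        (measurable_exitTime lam x₁ qm qp ε).comp measurable_fst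
      exact f.continuous.measurable.comp ((hT.const_mul mu).neg.exp.mul (measurable_pathEval_comp
        (((hT.const_mul (2 * mu)).exp.sub_const 1).div_const (2 * mu)) measurable_snd))
    have hJF : ∀ᵐ ω ∂P, f (J ε ω / ε) = F (W ω, V ω) := by
      filter_upwards [hτW ε, hB2.2.1] with ω hτω hω
      have hr : 0 ≤ (Real.exp (2 * mu * exitTime lam x₁ qm qp ε (W ω)) - 1) / (2 * mu) := by
        have h : 1 ≤ Real.exp (2 * mu * exitTime lam x₁ qm qp ε (W ω)) :=
          Real.one_le_exp (mul_nonneg (by positivity) exitTime_nonneg)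
        exact div_nonneg (by linarith) (by positivity)
      simp only [F]
      rw [pathEval_eq hω.2 hr, hJ, hτω, mul_assoc, mul_div_cancel_left₀ _ hε.ne']
    rw [hcond, ProbabilityTheory.cond, integral_smul_measure, integral_smul_measure,
      integral_congr_ae (ae_restrict_of_ae hJF),
      setIntegral_comp_prodMk_of_indepFun hW hV hB12 (measurableSet_exitRight ..) hF
        (M := ‖f‖) fun p => f.norm_coe_le_norm _]
    congr 1
    exact integral_congr_ae
      (ae_of_all _ fun ω => hB2.integral_stable_noise hmu exitTime_nonneg f)
  have hlimit : ∫ ω', f (N ω' / √(2 * mu)) ∂P' = gaussAvg f √(1 / (2 * mu)) := by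
    have hNm : AEMeasurable N P' := by
      by_contra h
      rw [Measure.map_of_not_aemeasurable h] at hN
      exact IsProbabilityMeasure.ne_zero (gaussianReal 0 1) hN.symm
    rw [gaussAvg, ← hN, integral_map hNm (by fun_prop : Continuous fun z =>
      f (√(1 / (2 * mu)) * z)).aestronglyMeasurable]
    congr 1 with ω'
    rw [Real.sqrt_div zero_le_one, Real.sqrt_one, one_div_mul_eq_div]
  rw [hlimit]
  have hcontG : Continuous fun t => gaussAvg f √(timeChange mu t) :=
    (continuous_gaussAvg f).comp (continuous_timeChange mu).sqrt
  have hmain := tendsto_integral_comp_of_tendsto_measure_le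
    (Q := fun ε => P[|A ε]) (τ := fun ε ω => exitTime lam x₁ qm qp ε (W ω)) (l := 𝓝[>] 0)
    ((hB1.eventually_measure_exitRight_ne_zero hlam hqm hx₁ hqp).mono fun ε h =>
      cond_isProbabilityMeasure h)
    (fun ε => (measurable_exitTime lam x₁ qm qp ε).comp hW) hcontG.measurable
    (fun t => norm_gaussAvg_le f _)
    ((continuous_gaussAvg f).continuousAt.tendsto.comp (tendsto_timeChange_atTop hmu).sqrt)
    (fun T hT => hB1.tendsto_cond_exitTime_le hlam hqm hx₁ hqp hT)
  refine hmain.congr' ?_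
  filter_upwards [self_mem_nhdsWithin] with ε hε
  exact (hkey ε hε).symm
end
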